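/- arXiv:1109.0898 — 3 statements merged into one kernel-verified Lean document; each statement's English description precedes it below -/
import Mathlib

section
/- The scan test satisfies the non-asymptotic bounds α(ψ^max_T) ≤ G_{nm}·Φ(−T_{nm}) and β_{nm,a}(ψ^max_T) ≤ Φ(T_{nm} − a√(nm)); moreover, in the asymptotic regime where N → ∞, M → ∞, n → ∞, m → ∞, p = n/N → 0 and q = m/M → 0, one has α(ψ^max_T) → 0. -/
/-!
The scan test is controlled by the exact law of each normalized submatrix sum: under `P_S`, `Y_C` is
Gaussian with unit variance and mean `(∑_{C} s_{ij}) / √(nm)` (`map_YC`).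

* Type I error: `t_max > T` forces `Y_C > T` for one of the `G_{nm}` submatrices `C`, each of which
  has probability `Φ(-T)` under `P_0`, so a union bound applies (`alphaErr_psiMax_le`).
* Type II error: if `S` is supported on `C` with entries at least `a`, the test can only accept when
  `Y_C ≤ T`, and the mean of `Y_C` is at least `a √(nm)` (`betaMax_psiMax_le`).
* Asymptotics: the Mills ratio bound `Φ(-T) ≤ e^{-T²/2} / (T √(2π))` at `T² = 2 log G` gives
  `G Φ(-T) ≤ 1 / (T √(2π))`, and `T → ∞` because `G ≥ C(N, n) ≥ N / n = 1 / p → ∞`.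

Errors are compared pointwise with sums of indicators of measurable events, so the measurability of
`t_max` itself is never needed.
-/

open MeasureTheory ProbabilityTheory Filter Topology
open scoped Classical

noncomputable section

/-- Standard normal cumulative distribution function `Φ`. -/
def Phi (x : ℝ) : ℝ := ((gaussianReal 0 1) (Set.Iic x)).toReal

/-- Law `P_S` of the `N × M` observation matrix `Y_{ij} = s_{ij} + ξ_{ij}`
with i.i.d. standard Gaussian noise. -/
def matLaw (N M : ℕ) (S : Fin N → Fin M → ℝ) : Measure ((Fin N × Fin M) → ℝ) :=
  Measure.pi fun ij => gaussianReal (S ij.1 ij.2) 1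

/-- First-type error `α(ψ) = E_0 ψ`. -/
def alphaErr (N M : ℕ) (ψ : ((Fin N × Fin M) → ℝ) → ℝ) : ℝ :=
  ∫ y, ψ y ∂(matLaw N M fun _ _ => 0)

/-- Second-type error `β(ψ, S) = E_S (1 - ψ)`. -/
def betaErr (N M : ℕ) (S : Fin N → Fin M → ℝ) (ψ : ((Fin N × Fin M) → ℝ) → ℝ) : ℝ :=
  ∫ y, (1 - ψ y) ∂(matLaw N M S)

/-- The alternative class `S_{nm,a}`: some `n × m` submatrix `C = A × B` has all entries `≥ a`,
and all other entries vanish. -/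
def SAlt (N M n m : ℕ) (a : ℝ) : Set (Fin N → Fin M → ℝ) :=
  {S | ∃ (A : Finset (Fin N)) (B : Finset (Fin M)), A.card = n ∧ B.card = m ∧
      (∀ i j, i ∈ A → j ∈ B → a ≤ S i j) ∧ ∀ i j, ¬(i ∈ A ∧ j ∈ B) → S i j = 0}

/-- Maximal second-type error `β_{nm,a}(ψ)`. -/
def betaMax (N M n m : ℕ) (a : ℝ) (ψ : ((Fin N × Fin M) → ℝ) → ℝ) : ℝ :=
  sSup ((fun S => betaErr N M S ψ) '' SAlt N M n m a)

/-- Linear statistic `t_lin`. -/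
def tlin (N M : ℕ) (y : (Fin N × Fin M) → ℝ) : ℝ :=
  (∑ ij : Fin N × Fin M, y ij) / Real.sqrt ((N : ℝ) * M)

/-- Linear test `ψ^lin_H = 1{t_lin > H}`. -/
def psiLin (N M : ℕ) (H : ℝ) (y : (Fin N × Fin M) → ℝ) : ℝ :=
  if H < tlin N M y then 1 else 0

/-- Normalized submatrix sum `Y_C` for `C = A × B`. -/
def YC (N M : ℕ) (y : (Fin N × Fin M) → ℝ)
    (A : Finset (Fin N)) (B : Finset (Fin M)) : ℝ :=
  (∑ i ∈ A, ∑ j ∈ B, y (i, j)) / Real.sqrt ((A.card : ℝ) * B.card)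

/-- Scan statistic `t_max = max_{C ∈ C_{nm}} Y_C`. -/
def tmax (N M n m : ℕ) (y : (Fin N × Fin M) → ℝ) : ℝ :=
  sSup {v | ∃ (A : Finset (Fin N)) (B : Finset (Fin M)),
    A.card = n ∧ B.card = m ∧ v = YC N M y A B}

/-- `G_{nm} = C(N,n) · C(M,m)`, the number of `n × m` submatrices. -/
def Gnm (N M n m : ℕ) : ℕ := N.choose n * M.choose m

/-- Threshold `T_{nm} = √(2 log G_{nm})`. -/
def Tnm (N M n m : ℕ) : ℝ := Real.sqrt (2 * Real.log (Gnm N M n m : ℝ))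

/-- Scan test `ψ^max_T = 1{t_max > T}`. -/
def psiMax (N M n m : ℕ) (T : ℝ) (y : (Fin N × Fin M) → ℝ) : ℝ :=
  if T < tmax N M n m y then 1 else 0

/-! ### Laws of submatrix sums -/

/-- Finite sums of coordinates under a product of unit-variance Gaussians. -/
lemma hasLaw_sum_pi {ι : Type*} [Fintype ι] (μ : ι → ℝ) (s : Finset ι) :
    HasLaw (fun y : ι → ℝ => ∑ i ∈ s, y i) (gaussianReal (∑ i ∈ s, μ i) (s.card : NNReal))
      (Measure.pi fun i => gaussianReal (μ i) 1) := by
  induction s using Finset.induction_on with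
  | empty =>
    refine ⟨by fun_prop, ?_⟩
    simp [gaussianReal_zero_var, Measure.map_const]
  | insert i s hi ih =>
    refine ⟨by fun_prop, ?_⟩
    have hind : iIndepFun (fun (j : ι) (y : ι → ℝ) => y j)
        (Measure.pi fun i => gaussianReal (μ i) 1) :=
      iIndepFun_pi (X := fun _ x => x) (fun _ => aemeasurable_id)
    have h2 := (hind.indepFun_finsetSum_of_notMem (fun j => measurable_pi_apply j) hi).symm
    have hi' : (Measure.pi fun i => gaussianReal (μ i) 1).map (fun y : ι → ℝ => y i)
        = gaussianReal (μ i) 1 :=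
      (measurePreserving_eval (fun i => gaussianReal (μ i) 1) i).map_eq
    have hs : (Measure.pi fun i => gaussianReal (μ i) 1).map (∑ j ∈ s, fun y : ι → ℝ => y j)
        = gaussianReal (∑ i ∈ s, μ i) (s.card : NNReal) := by
      rw [← ih.map_eq]
      congr 1
      ext y
      simp
    have := gaussianReal_add_gaussianReal_of_indepFun h2 hi' hs
    rw [Finset.sum_insert hi, Finset.card_insert_of_notMem hi]
    convert this using 2
    · ext y
      simp [Finset.sum_insert hi]
    · push_cast
      ring

lemma measurable_YC (N M : ℕ) (A : Finset (Fin N)) (B : Finset (Fin M)) :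
    Measurable (fun y => YC N M y A B) := by
  unfold YC
  fun_prop

lemma map_YC (N M : ℕ) (S : Fin N → Fin M → ℝ) (A : Finset (Fin N)) (B : Finset (Fin M))
    (hA : A.Nonempty) (hB : B.Nonempty) :
    (matLaw N M S).map (fun y => YC N M y A B) =
      gaussianReal ((∑ i ∈ A, ∑ j ∈ B, S i j) / Real.sqrt ((A.card : ℝ) * B.card)) 1 := by
  have h := gaussianReal_div_const
    (hasLaw_sum_pi (fun ij : Fin N × Fin M => S ij.1 ij.2) (A ×ˢ B)) (Real.sqrt ((A.card : ℝ) * B.card))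
  have hA' : (0 : ℝ) < A.card := by exact_mod_cast hA.card_pos
  have hB' : (0 : ℝ) < B.card := by exact_mod_cast hB.card_pos
  have h1 := h.map_eq
  simp only [Finset.sum_product] at h1
  unfold YC matLaw
  rw [h1]
  congr 1
  ext
  simp [Finset.card_product]
  field_simp
  rw [Real.sq_sqrt hA'.le, Real.sq_sqrt hB'.le]

/-! ### The normal distribution function -/

lemma Phi_nonneg (x : ℝ) : 0 ≤ Phi x := ENNReal.toReal_nonneg

lemma Phi_mono {x y : ℝ} (h : x ≤ y) : Phi x ≤ Phi y :=
  measureReal_mono (μ := gaussianReal 0 1) (Set.Iic_subset_Iic.2 h)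

lemma gaussianReal_Iic (μ T : ℝ) : (gaussianReal μ 1).real (Set.Iic T) = Phi (T - μ) := by
  have h : gaussianReal μ 1 = (gaussianReal 0 1).map (· + μ) := by
    rw [gaussianReal_map_add_const, zero_add]
  rw [h, map_measureReal_apply (by fun_prop) measurableSet_Iic, Phi, Measure.real]
  congr 2
  ext x
  simp [le_sub_iff_add_le]

lemma gaussianReal_Ici (T : ℝ) : (gaussianReal 0 1).real (Set.Ici T) = Phi (-T) := by
  have h : gaussianReal 0 1 = (gaussianReal 0 1).map (fun x => -x) := by
    rw [gaussianReal_map_neg, neg_zero]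
  rw [h, map_measureReal_apply (by fun_prop) measurableSet_Ici, Phi, Measure.real]
  congr 2
  ext x
  simp

/-- Mills ratio bound; it follows from `-x²/2 ≤ T x + T²/2`, that is `(x + T)² ≥ 0`. -/
lemma Phi_neg_le {T : ℝ} (hT : 0 < T) :
    Phi (-T) ≤ (Real.sqrt (2 * Real.pi))⁻¹ * (Real.exp (-(T ^ 2) / 2) / T) := by
  unfold Phi
  rw [gaussianReal_apply_eq_integral 0 one_ne_zero,
    ENNReal.toReal_ofReal (integral_nonneg fun x => gaussianPDFReal_nonneg _ _ _)]
  calc ∫ x in Set.Iic (-T), gaussianPDFReal 0 1 x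
      ≤ ∫ x in Set.Iic (-T),
          ((Real.sqrt (2 * Real.pi))⁻¹ * Real.exp (T ^ 2 / 2)) * Real.exp (T * x) := by
        refine integral_mono (integrable_gaussianPDFReal 0 1).integrableOn
          ((integrableOn_exp_mul_Iic hT (-T)).const_mul _) fun x => ?_
        simp only [gaussianPDFReal, NNReal.coe_one, mul_one, sub_zero]
        rw [mul_assoc, ← Real.exp_add]
        gcongr
        nlinarith [sq_nonneg (x + T)]
    _ = _ := by
        rw [integral_const_mul, integral_exp_mul_Iic hT, mul_assoc, ← mul_div_assoc,
          ← Real.exp_add]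
        congr 4
        ring

/-! ### Error bounds for the scan test -/

lemma isProbabilityMeasure_matLaw (N M : ℕ) (S : Fin N → Fin M → ℝ) :
    IsProbabilityMeasure (matLaw N M S) := by
  unfold matLaw
  infer_instance

lemma psiMax_nonneg (N M n m : ℕ) (T : ℝ) (y : (Fin N × Fin M) → ℝ) : 0 ≤ psiMax N M n m T y := by
  unfold psiMax
  split_ifs <;> norm_num

lemma psiMax_le_one (N M n m : ℕ) (T : ℝ) (y : (Fin N × Fin M) → ℝ) : psiMax N M n m T y ≤ 1 := by
  unfold psiMax
  split_ifs <;> norm_num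

lemma alphaErr_psiMax_le (N M n m : ℕ) (hn : 1 ≤ n) (hnN : n ≤ N) (hm : 1 ≤ m) (hmM : m ≤ M)
    (T : ℝ) : alphaErr N M (psiMax N M n m T) ≤ (Gnm N M n m : ℝ) * Phi (-T) := by
  have := isProbabilityMeasure_matLaw N M (fun _ _ => 0)
  let F : Finset (Finset (Fin N) × Finset (Fin M)) :=
    Finset.powersetCard n Finset.univ ×ˢ Finset.powersetCard m Finset.univ
  have hmeas : ∀ C : Finset (Fin N) × Finset (Fin M),
      MeasurableSet {y : Fin N × Fin M → ℝ | T ≤ YC N M y C.1 C.2} := fun C =>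
    measurableSet_le measurable_const (measurable_YC N M C.1 C.2)
  have hint : ∀ C ∈ F, Integrable
      (Set.indicator {y : Fin N × Fin M → ℝ | T ≤ YC N M y C.1 C.2} (fun _ => (1 : ℝ)))
      (matLaw N M fun _ _ => 0) := fun C _ => (integrable_const 1).indicator (hmeas C)
  have hprob : ∀ C ∈ F, ∫ y,
      (Set.indicator {y : Fin N × Fin M → ℝ | T ≤ YC N M y C.1 C.2} (fun _ => (1 : ℝ))) y
        ∂(matLaw N M fun _ _ => 0) = Phi (-T) := by
    intro C hC
    simp only [F, Finset.mem_product, Finset.mem_powersetCard] at hC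
    have hmap := map_YC N M (fun _ _ => 0) C.1 C.2
      (Finset.card_pos.1 (by omega)) (Finset.card_pos.1 (by omega))
    simp only [Finset.sum_const_zero, zero_div] at hmap
    rw [integral_indicator_const _ (hmeas C), ← gaussianReal_Ici, ← hmap,
      map_measureReal_apply (measurable_YC N M C.1 C.2) measurableSet_Ici]
    simp [Set.preimage, Set.Ici]
  calc alphaErr N M (psiMax N M n m T)
      ≤ ∫ y, ∑ C ∈ F,
          (Set.indicator {y : Fin N × Fin M → ℝ | T ≤ YC N M y C.1 C.2} (fun _ => (1 : ℝ))) y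
          ∂(matLaw N M fun _ _ => 0) := by
        refine integral_mono_of_nonneg (ae_of_all _ fun y => psiMax_nonneg N M n m T y)
          (integrable_finsetSum _ hint) (ae_of_all _ fun y => ?_)
        have hnn : ∀ C ∈ F, 0 ≤
            (Set.indicator {y : Fin N × Fin M → ℝ | T ≤ YC N M y C.1 C.2} (fun _ => (1 : ℝ))) y :=
          fun C _ => Set.indicator_nonneg (fun _ _ => zero_le_one) y
        by_cases h : T < tmax N M n m y
        · obtain ⟨A₀, -, hA₀⟩ := Finset.exists_subset_card_eq
            (s := (Finset.univ : Finset (Fin N))) (n := n) (by simpa using hnN)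
          obtain ⟨B₀, -, hB₀⟩ := Finset.exists_subset_card_eq
            (s := (Finset.univ : Finset (Fin M))) (n := m) (by simpa using hmM)
          have hne : {v | ∃ (A : Finset (Fin N)) (B : Finset (Fin M)),
              A.card = n ∧ B.card = m ∧ v = YC N M y A B}.Nonempty :=
            ⟨_, A₀, B₀, hA₀, hB₀, rfl⟩
          obtain ⟨v, ⟨A, B, hA, hB, rfl⟩, hv⟩ := exists_lt_of_lt_csSup hne h
          have hmem : (A, B) ∈ F := by
            simp [F, Finset.mem_product, Finset.mem_powersetCard, hA, hB]
          refine le_trans ?_ (Finset.single_le_sum hnn hmem)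
          simp only [Set.indicator, Set.mem_ofPred_eq, hv.le, if_true]
          exact psiMax_le_one N M n m T y
        · simp only [psiMax, h, if_false]
          exact Finset.sum_nonneg hnn
    _ = ∑ C ∈ F, Phi (-T) := by
        rw [integral_finsetSum _ hint]
        exact Finset.sum_congr rfl hprob
    _ = (Gnm N M n m : ℝ) * Phi (-T) := by
        simp [F, Gnm, Finset.card_product, Finset.card_powersetCard]

lemma YC_le_tmax (N M n m : ℕ) (y : (Fin N × Fin M) → ℝ) (A : Finset (Fin N))
    (B : Finset (Fin M)) (hA : A.card = n) (hB : B.card = m) : YC N M y A B ≤ tmax N M n m y := by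
  refine le_csSup (Set.Finite.bddAbove ?_) ⟨A, B, hA, hB, rfl⟩
  refine (Set.finite_range
    (fun C : Finset (Fin N) × Finset (Fin M) => YC N M y C.1 C.2)).subset ?_
  rintro v ⟨A, B, -, -, rfl⟩
  exact ⟨(A, B), rfl⟩

lemma betaMax_psiMax_le (N M n m : ℕ) (hn : 1 ≤ n) (hm : 1 ≤ m) (a T : ℝ) :
    betaMax N M n m a (psiMax N M n m T) ≤ Phi (T - a * Real.sqrt ((n : ℝ) * m)) := by
  refine Real.sSup_le ?_ (Phi_nonneg _)
  rintro _ ⟨S, ⟨A, B, hA, hB, hS, -⟩, rfl⟩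
  have := isProbabilityMeasure_matLaw N M S
  have hmeas : MeasurableSet {y : Fin N × Fin M → ℝ | YC N M y A B ≤ T} :=
    measurableSet_le (measurable_YC N M A B) measurable_const
  have hmap := map_YC N M S A B (Finset.card_pos.1 (by omega)) (Finset.card_pos.1 (by omega))
  have hnm : (0 : ℝ) < (n : ℝ) * m := by
    have : (0 : ℝ) < n := by exact_mod_cast hn
    have : (0 : ℝ) < m := by exact_mod_cast hm
    positivity
  calc betaErr N M S (psiMax N M n m T)
      ≤ ∫ y, (Set.indicator {y : Fin N × Fin M → ℝ | YC N M y A B ≤ T} (fun _ => (1 : ℝ))) y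
          ∂(matLaw N M S) := by
        refine integral_mono_of_nonneg
          (ae_of_all _ fun y => sub_nonneg.2 (psiMax_le_one N M n m T y))
          ((integrable_const 1).indicator hmeas) (ae_of_all _ fun y => ?_)
        by_cases h : YC N M y A B ≤ T
        · simp only [Set.indicator, Set.mem_ofPred_eq, h, if_true]
          linarith [psiMax_nonneg N M n m T y]
        · have h' : T < tmax N M n m y :=
            (not_le.1 h).trans_le (YC_le_tmax N M n m y A B hA hB)
          simp [Set.indicator, h, psiMax, h']
    _ = Phi (T - (∑ i ∈ A, ∑ j ∈ B, S i j) / Real.sqrt ((A.card : ℝ) * B.card)) := by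
        rw [integral_indicator_const _ hmeas, ← gaussianReal_Iic, ← hmap,
          map_measureReal_apply (measurable_YC N M A B) measurableSet_Iic]
        simp [Set.preimage, Set.Iic]
    _ ≤ Phi (T - a * Real.sqrt ((n : ℝ) * m)) := by
        refine Phi_mono (sub_le_sub_left ?_ _)
        rw [hA, hB, le_div_iff₀ (Real.sqrt_pos.2 hnm), mul_assoc, Real.mul_self_sqrt hnm.le]
        calc a * ((n : ℝ) * m) = ∑ i ∈ A, ∑ j ∈ B, a := by
              simp only [Finset.sum_const, hA, hB, nsmul_eq_mul]
              ring
          _ ≤ _ := Finset.sum_le_sum fun i hi => Finset.sum_le_sum fun j hj => hS i j hi hj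

/-! ### Asymptotics -/

lemma div_le_Gnm (N M n m : ℕ) (hn : 1 ≤ n) (hnN : n ≤ N) (hmM : m ≤ M) :
    (N : ℝ) / n ≤ Gnm N M n m := by
  have h0 : (0 : ℝ) < n := by exact_mod_cast hn
  rw [div_le_iff₀ h0]
  norm_cast
  obtain ⟨k, rfl⟩ : ∃ k, n = k + 1 := ⟨n - 1, by omega⟩
  obtain ⟨L, rfl⟩ : ∃ L, N = L + 1 := ⟨N - 1, by omega⟩
  have h1 : 1 ≤ L.choose k := Nat.choose_pos (by omega)
  have h2 : 1 ≤ M.choose m := Nat.choose_pos hmM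
  -- the absorption identity `N * C(N - 1, n - 1) = C(N, n) * n`
  have h3 := Nat.add_one_mul_choose_eq L k
  unfold Gnm
  nlinarith [Nat.mul_le_mul_left (L + 1) h1,
    Nat.mul_le_mul_left ((L + 1).choose (k + 1) * (k + 1)) h2]

/-- At the threshold, `e^{-T²/2} = 1/G`, so the Mills bound leaves only the factor `1/(T √(2π))`. -/
lemma Gnm_mul_Phi_le (N M n m : ℕ) (hG : (1 : ℝ) < Gnm N M n m) :
    (Gnm N M n m : ℝ) * Phi (-(Tnm N M n m)) ≤
      (Real.sqrt (2 * Real.pi))⁻¹ * (Tnm N M n m)⁻¹ := by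
  have hlog : 0 < 2 * Real.log (Gnm N M n m : ℝ) := by
    have := Real.log_pos hG
    positivity
  have hT : 0 < Tnm N M n m := Real.sqrt_pos.2 hlog
  have hsq : Real.exp (-(Tnm N M n m ^ 2) / 2) = (Gnm N M n m : ℝ)⁻¹ := by
    rw [Tnm, Real.sq_sqrt hlog.le]
    rw [show -(2 * Real.log (Gnm N M n m : ℝ)) / 2 = -Real.log (Gnm N M n m : ℝ) by ring,
      Real.exp_neg, Real.exp_log (by linarith)]
  have h := mul_le_mul_of_nonneg_left (Phi_neg_le hT) (by linarith : (0 : ℝ) ≤ Gnm N M n m)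
  rw [hsq] at h
  refine h.trans_eq ?_
  have : (Gnm N M n m : ℝ) ≠ 0 := by linarith
  field_simp

/-- Proposition 2: non-asymptotic bounds `α(ψ^max_T) ≤ G_{nm} Φ(-T_{nm})`,
`β_{nm,a}(ψ^max_T) ≤ Φ(T_{nm} - a√(nm))`; and in the asymptotic regime
`N, M, n, m → ∞`, `p = n/N → 0`, `q = m/M → 0`, one has `α(ψ^max_T) → 0`. -/
theorem stmt1 (N M n m : ℕ → ℕ) (a : ℕ → ℝ)
    (hb : ∀ t, 1 ≤ n t ∧ n t ≤ N t ∧ 1 ≤ m t ∧ m t ≤ M t)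
    (ha : ∀ t, 0 < a t)
    (hN : Tendsto N atTop atTop) (hM : Tendsto M atTop atTop)
    (hn : Tendsto n atTop atTop) (hm : Tendsto m atTop atTop)
    (hp : Tendsto (fun t => (n t : ℝ) / N t) atTop (nhds 0))
    (hq : Tendsto (fun t => (m t : ℝ) / M t) atTop (nhds 0)) :
    (∀ t,
      alphaErr (N t) (M t)
          (psiMax (N t) (M t) (n t) (m t) (Tnm (N t) (M t) (n t) (m t))) ≤
        (Gnm (N t) (M t) (n t) (m t) : ℝ) * Phi (-(Tnm (N t) (M t) (n t) (m t))) ∧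
      betaMax (N t) (M t) (n t) (m t) (a t)
          (psiMax (N t) (M t) (n t) (m t) (Tnm (N t) (M t) (n t) (m t))) ≤
        Phi (Tnm (N t) (M t) (n t) (m t) - a t * Real.sqrt ((n t : ℝ) * m t))) ∧
    Tendsto (fun t =>
      alphaErr (N t) (M t)
        (psiMax (N t) (M t) (n t) (m t) (Tnm (N t) (M t) (n t) (m t))))
      atTop (nhds 0) := by
  have hα : ∀ t, alphaErr (N t) (M t)
      (psiMax (N t) (M t) (n t) (m t) (Tnm (N t) (M t) (n t) (m t))) ≤
        (Gnm (N t) (M t) (n t) (m t) : ℝ) * Phi (-(Tnm (N t) (M t) (n t) (m t))) := fun t =>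
    alphaErr_psiMax_le _ _ _ _ (hb t).1 (hb t).2.1 (hb t).2.2.1 (hb t).2.2.2 _
  refine ⟨fun t => ⟨hα t, betaMax_psiMax_le _ _ _ _ (hb t).1 (hb t).2.2.1 _ _⟩, ?_⟩
  have hratio : Tendsto (fun t => (N t : ℝ) / n t) atTop atTop := by
    have hpos : ∀ t, 0 < (n t : ℝ) / N t := fun t => by
      have h1 : (0 : ℝ) < n t := by exact_mod_cast (hb t).1
      have h2 : (0 : ℝ) < N t := by exact_mod_cast (hb t).1.trans (hb t).2.1
      positivity
    have := (tendsto_nhdsWithin_iff.2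
      ⟨hp, Eventually.of_forall fun t => Set.mem_Ioi.2 (hpos t)⟩).inv_tendsto_nhdsGT_zero
    refine this.congr fun t => ?_
    simp
  have hG : Tendsto (fun t => (Gnm (N t) (M t) (n t) (m t) : ℝ)) atTop atTop :=
    tendsto_atTop_mono
      (fun t => div_le_Gnm _ _ _ _ (hb t).1 (hb t).2.1 (hb t).2.2.2) hratio
  have hT : Tendsto (fun t => Tnm (N t) (M t) (n t) (m t)) atTop atTop :=
    Real.tendsto_sqrt_atTop.comp ((Real.tendsto_log_atTop.comp hG).const_mul_atTop two_pos)
  have hlim : Tendsto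
      (fun t => (Real.sqrt (2 * Real.pi))⁻¹ * (Tnm (N t) (M t) (n t) (m t))⁻¹) atTop (nhds 0) := by
    simpa using hT.inv_tendsto_atTop.const_mul (Real.sqrt (2 * Real.pi))⁻¹
  refine squeeze_zero' (Eventually.of_forall fun t =>
    integral_nonneg fun y => psiMax_nonneg _ _ _ _ _ y) ?_ hlim
  filter_upwards [hG.eventually_gt_atTop 1] with t ht
  exact (hα t).trans (Gnm_mul_Phi_le _ _ _ _ ht)
end
end

section
/- (Adaptive upper bounds.) Assume sup_{(n,m)∈K_{NM}} (1/n + 1/m + n/N + m/M) → 0 and sup_{(n,m)∈K_{NM}} (log N/(n log(N/n)) + log M/(m log(M/m))) → 0 as N, M → ∞. Suppose the family a = {a_{nm}} satisfies at least one of: (i) min_{(n,m)∈K_{NM}} a_{nm}² n m (n/N)(m/M) → ∞; (ii) liminf min_{(n,m)∈K_{NM}} a_{nm}² n m / (2(n log(N/n) + m log(M/m))) > 1, where under (i) the threshold H → ∞ is chosen with H < c·a_{nm}√(nm(n/N)(m/M)) for all (n,m) ∈ K_{NM} and some fixed c < 1. Then γ_{NM,a}(ψ*_{NM}) → 0. 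-/
/-!
Every statistic involved is a sum of entries of `Y` over a block, divided by the square root of the
block's cardinality. Such a normalized sum is Gaussian with unit variance, so its deviations from
its mean obey the Chernoff bound `exp (-x² / 2)` on either side (`block_upper`, `block_lower`).

*Type I error* (`alphaErr_le`). The linear test contributes `exp (-H² / 2)`. By the choice of
`V_{nm}`, each block of size `n × m` contributes at most `1 / (N M G_{nm})` to the scan test, hence
each pair `(n, m)` at most `1 / (N M)`. As `n ≤ δ N` and `m ≤ δ M` uniformly on `K`, there are at
most `δ² N M` pairs, and the union bound gives `δ²`, where `δ → 0`.

*Type II error.* Under (i), the mean of `t_lin` is at least `μ = a √(n m (n/N)(m/M)) → ∞` and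
exceeds `H` by at least `(1 - c) μ` (`betaErr_lin_le`). Under (ii), put
`D = n log (N/n) + m log (M/m)`, which tends to infinity. The bound
`log (N choose n) ≤ n log (N/n) + n` and the uniform conditions on `K` give
`V_{nm}² ≤ 2 (1 + o(1)) D` (`Vnm_sq_le`), whereas the mean of `Y_C` on the true block is at least
`√(2 c D)` with `c > 1`. The gap is thus of order `√D` (`scan_separation`), and the scan test
detects the block (`betaErr_scan_le`).

Measurability of the tests is never needed: a `[0,1]`-valued function vanishing off a set has
integral at most the outer measure of that set (`integral_le_measureReal`).
-/

open MeasureTheory ProbabilityTheory Filter Topology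
open scoped Classical

noncomputable section

/-- `V_{nm} = √(2 log(N M G_{nm}))`. -/
def Vnm (N M n m : ℕ) : ℝ := Real.sqrt (2 * Real.log ((N : ℝ) * M * Gnm N M n m))

/-- Adaptive scan statistic `t_{NM,max} = max_{(n,m) ∈ K} max_{C ∈ C_{nm}} Y_C / V_{nm}`. -/
def tAdapt (N M : ℕ) (K : Finset (ℕ × ℕ)) (y : (Fin N × Fin M) → ℝ) : ℝ :=
  sSup {v | ∃ nm ∈ K, ∃ (A : Finset (Fin N)) (B : Finset (Fin M)),
    A.card = nm.1 ∧ B.card = nm.2 ∧ v = YC N M y A B / Vnm N M nm.1 nm.2}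

/-- Adaptive scan test `ψ^max_{NM} = 1{t_{NM,max} > 1}`. -/
def psiAdapt (N M : ℕ) (K : Finset (ℕ × ℕ)) (y : (Fin N × Fin M) → ℝ) : ℝ :=
  if 1 < tAdapt N M K y then 1 else 0

/-- Maximal second-type error over the combined alternative
`∪_{(n,m) ∈ K} S_{nm, a_{nm}}`. -/
def betaMaxAdapt (N M : ℕ) (K : Finset (ℕ × ℕ)) (a : ℕ × ℕ → ℝ)
    (ψ : ((Fin N × Fin M) → ℝ) → ℝ) : ℝ :=
  sSup ((fun S => betaErr N M S ψ) '' ⋃ nm ∈ K, SAlt N M nm.1 nm.2 (a nm))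

/-- Bounds the expectation of a `[0,1]`-valued function vanishing off `U` by the probability of `U`;
no measurability of the function or of the set is required. -/
lemma integral_le_measureReal {Ω : Type*} [MeasurableSpace Ω] (μ : Measure Ω)
    [IsProbabilityMeasure μ] (f : Ω → ℝ) (U : Set Ω) (h0 : ∀ y, 0 ≤ f y) (h1 : ∀ y, f y ≤ 1)
    (hU : ∀ y, y ∉ U → f y = 0) : ∫ y, f y ∂μ ≤ μ.real U := by
  have hm : MeasurableSet (toMeasurable μ U) := measurableSet_toMeasurable μ U
  have hle : ∫ y, f y ∂μ ≤ ∫ y, (toMeasurable μ U).indicator (1 : Ω → ℝ) y ∂μ := by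
    refine integral_mono_of_nonneg (Eventually.of_forall h0) ?_ (Eventually.of_forall fun y => ?_)
    · exact (integrable_const (1 : ℝ)).indicator hm
    · by_cases hy : y ∈ toMeasurable μ U
      · simpa [Set.indicator_of_mem hy] using h1 y
      · have : y ∉ U := fun h => hy (subset_toMeasurable μ U h)
        simp [Set.indicator_of_notMem hy, hU y this]
  rw [integral_indicator_one hm] at hle
  simpa [Measure.real, measure_toMeasurable] using hle

instance matLaw_isProbabilityMeasure (N M : ℕ) (S : Fin N → Fin M → ℝ) :
    IsProbabilityMeasure (matLaw N M S) := by
  unfold matLaw; infer_instance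

/-! ### Gaussian tail bounds for block sums -/

lemma subgaussian_coord (N M : ℕ) (S : Fin N → Fin M → ℝ) (ij : Fin N × Fin M) :
    HasSubgaussianMGF (fun y : (Fin N × Fin M) → ℝ => y ij - S ij.1 ij.2) 1 (matLaw N M S) := by
  have hmap : (matLaw N M S).map (fun y => y ij - S ij.1 ij.2) = gaussianReal 0 1 := by
    have h1 : (matLaw N M S).map (fun y => y ij) = gaussianReal (S ij.1 ij.2) 1 :=
      (measurePreserving_eval (fun ij : Fin N × Fin M => gaussianReal (S ij.1 ij.2) 1) ij).map_eq
    have h2 := gaussianReal_map_sub_const (μ := S ij.1 ij.2) (v := 1) (S ij.1 ij.2)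
    rw [← h1, Measure.map_map (by fun_prop) (by fun_prop), sub_self] at h2
    exact h2
  refine ⟨fun t => ?_, fun t => ?_⟩
  · have h := integrable_exp_mul_gaussianReal (μ := 0) (v := 1) t
    rw [← hmap] at h
    exact h.comp_measurable (by fun_prop)
  · rw [mgf_gaussianReal hmap t]
    simp

lemma iIndepFun_coord (N M : ℕ) (S : Fin N → Fin M → ℝ) (s : ℝ) :
    iIndepFun (fun (ij : Fin N × Fin M) (y : (Fin N × Fin M) → ℝ) => s * (y ij - S ij.1 ij.2))
      (matLaw N M S) :=
  iIndepFun_pi (X := fun (ij : Fin N × Fin M) (u : ℝ) => s * (u - S ij.1 ij.2))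
    (fun ij => by fun_prop)

/-- Chernoff bound for a centred block sum, in both directions: `s` is the sign. -/
lemma block_tail (N M : ℕ) (S : Fin N → Fin M → ℝ) (C : Finset (Fin N × Fin M))
    (hC : C.Nonempty) (s : ℝ) (hs : s = 1 ∨ s = -1) (x : ℝ) (hx : 0 ≤ x) :
    (matLaw N M S).real {y | x * √(C.card : ℝ) ≤ ∑ ij ∈ C, s * (y ij - S ij.1 ij.2)}
      ≤ Real.exp (-x ^ 2 / 2) := by
  have hsub : ∀ ij ∈ C, HasSubgaussianMGF
      (fun y : (Fin N × Fin M) → ℝ => s * (y ij - S ij.1 ij.2)) 1 (matLaw N M S) := by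
    intro ij _
    rcases hs with rfl | rfl
    · simpa using subgaussian_coord N M S ij
    · have h := (subgaussian_coord N M S ij).neg
      refine h.congr (Eventually.of_forall fun y => ?_)
      simp
  have h := HasSubgaussianMGF.measure_sum_ge_le_of_iIndepFun (iIndepFun_coord N M S s)
    (c := fun _ => 1) (s := C) hsub (ε := x * √(C.card : ℝ)) (by positivity)
  refine h.trans (le_of_eq ?_)
  have hk : (0 : ℝ) < C.card := by exact_mod_cast hC.card_pos
  congr 1
  rw [mul_pow, Real.sq_sqrt hk.le]
  simp
  field_simp

lemma block_upper (N M : ℕ) (C : Finset (Fin N × Fin M)) (hC : C.Nonempty) (x : ℝ) (hx : 0 ≤ x) :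
    (matLaw N M fun _ _ => 0).real {y | x ≤ (∑ ij ∈ C, y ij) / √(C.card : ℝ)}
      ≤ Real.exp (-x ^ 2 / 2) := by
  have hk : (0 : ℝ) < √(C.card : ℝ) := Real.sqrt_pos.2 (by exact_mod_cast hC.card_pos)
  refine le_trans (measureReal_mono ?_) (block_tail N M (fun _ _ => 0) C hC 1 (Or.inl rfl) x hx)
  intro y hy
  simpa [le_div_iff₀ hk] using hy

lemma block_lower (N M : ℕ) (S : Fin N → Fin M → ℝ) (C : Finset (Fin N × Fin M))
    (hC : C.Nonempty) (x T : ℝ) (hx : 0 ≤ x)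
    (hT : T + x ≤ (∑ ij ∈ C, S ij.1 ij.2) / √(C.card : ℝ)) :
    (matLaw N M S).real {y | (∑ ij ∈ C, y ij) / √(C.card : ℝ) ≤ T}
      ≤ Real.exp (-x ^ 2 / 2) := by
  have hk : (0 : ℝ) < √(C.card : ℝ) := Real.sqrt_pos.2 (by exact_mod_cast hC.card_pos)
  refine le_trans (measureReal_mono ?_) (block_tail N M S C hC (-1) (Or.inr rfl) x hx)
  intro y hy
  simp only [Set.mem_ofPred_eq] at hy ⊢
  rw [div_le_iff₀ hk] at hy
  rw [le_div_iff₀ hk] at hT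
  rw [← Finset.mul_sum, Finset.sum_sub_distrib]
  linarith

lemma tlin_eq (N M : ℕ) (y : (Fin N × Fin M) → ℝ) :
    tlin N M y = (∑ ij ∈ Finset.univ, y ij) / √((Finset.univ : Finset (Fin N × Fin M)).card : ℝ) := by
  simp [tlin]

lemma YC_eq (N M : ℕ) (y : (Fin N × Fin M) → ℝ) (A : Finset (Fin N)) (B : Finset (Fin M)) :
    YC N M y A B = (∑ ij ∈ A ×ˢ B, y ij) / √((A ×ˢ B).card : ℝ) := by
  simp [YC, Finset.sum_product]

/-! ### Behaviour of the combined test -/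

/-- The combined test `ψ* = max{ψ^lin_H, ψ^max}`. -/
abbrev psiStar (N M : ℕ) (K : Finset (ℕ × ℕ)) (H : ℝ) (y : (Fin N × Fin M) → ℝ) : ℝ :=
  max (psiLin N M H y) (psiAdapt N M K y)

lemma psiStar_nonneg (N M : ℕ) (K : Finset (ℕ × ℕ)) (H : ℝ) (y : (Fin N × Fin M) → ℝ) :
    0 ≤ psiStar N M K H y := by
  unfold psiStar psiLin psiAdapt
  split_ifs <;> simp

lemma psiStar_le_one (N M : ℕ) (K : Finset (ℕ × ℕ)) (H : ℝ) (y : (Fin N × Fin M) → ℝ) :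
    psiStar N M K H y ≤ 1 := by
  unfold psiStar psiLin psiAdapt
  split_ifs <;> simp

lemma psiStar_eq_one_of_lin (N M : ℕ) (K : Finset (ℕ × ℕ)) (H : ℝ) (y : (Fin N × Fin M) → ℝ)
    (h : H < tlin N M y) : psiStar N M K H y = 1 := by
  refine le_antisymm (psiStar_le_one N M K H y) (le_max_of_le_left ?_)
  simp [psiLin, h]

/-- The values over which the adaptive scan statistic takes its maximum form a finite set, so the
supremum defining it is a genuine one. -/
lemma tAdapt_bddAbove (N M : ℕ) (K : Finset (ℕ × ℕ)) (y : (Fin N × Fin M) → ℝ) :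
    BddAbove {v | ∃ nm ∈ K, ∃ (A : Finset (Fin N)) (B : Finset (Fin M)),
      A.card = nm.1 ∧ B.card = nm.2 ∧ v = YC N M y A B / Vnm N M nm.1 nm.2} := by
  refine Set.Finite.bddAbove (Set.Finite.subset
    (Set.finite_range fun p : K × Finset (Fin N) × Finset (Fin M) =>
      YC N M y p.2.1 p.2.2 / Vnm N M p.1.1.1 p.1.1.2) ?_)
  rintro v ⟨nm, hnm, A, B, -, -, rfl⟩
  exact ⟨(⟨nm, hnm⟩, A, B), rfl⟩

lemma psiStar_eq_one_of_scan (N M : ℕ) (K : Finset (ℕ × ℕ)) (H : ℝ) (y : (Fin N × Fin M) → ℝ)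
    (nm : ℕ × ℕ) (hnm : nm ∈ K) (A : Finset (Fin N)) (B : Finset (Fin M)) (hA : A.card = nm.1)
    (hB : B.card = nm.2) (hV : 0 < Vnm N M nm.1 nm.2) (h : Vnm N M nm.1 nm.2 < YC N M y A B) :
    psiStar N M K H y = 1 := by
  refine le_antisymm (psiStar_le_one N M K H y) (le_max_of_le_right ?_)
  have : 1 < tAdapt N M K y :=
    lt_of_lt_of_le ((one_lt_div hV).2 h)
      (le_csSup (tAdapt_bddAbove N M K y) ⟨nm, hnm, A, B, hA, hB, rfl⟩)
  simp [psiAdapt, this]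

lemma exists_of_psiStar_ne_zero (N M : ℕ) (K : Finset (ℕ × ℕ)) (H : ℝ)
    (y : (Fin N × Fin M) → ℝ) (hV : ∀ nm ∈ K, 0 < Vnm N M nm.1 nm.2)
    (h : psiStar N M K H y ≠ 0) :
    H < tlin N M y ∨ ∃ nm ∈ K, ∃ (A : Finset (Fin N)) (B : Finset (Fin M)),
      A.card = nm.1 ∧ B.card = nm.2 ∧ Vnm N M nm.1 nm.2 < YC N M y A B := by
  by_cases h1 : H < tlin N M y
  · exact Or.inl h1
  right
  have h2 : 1 < tAdapt N M K y := by
    by_contra h2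
    simp [psiStar, psiLin, psiAdapt, h1, h2] at h
  -- The scan statistic of an empty family is `sSup ∅ = 0`, which does not exceed `1`.
  have hne : {v | ∃ nm ∈ K, ∃ (A : Finset (Fin N)) (B : Finset (Fin M)),
      A.card = nm.1 ∧ B.card = nm.2 ∧ v = YC N M y A B / Vnm N M nm.1 nm.2}.Nonempty := by
    by_contra hne
    rw [Set.not_nonempty_iff_eq_empty] at hne
    rw [tAdapt, hne, Real.sSup_empty] at h2
    linarith
  obtain ⟨v, ⟨nm, hnm, A, B, hA, hB, rfl⟩, hv⟩ := exists_lt_of_lt_csSup hne h2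
  exact ⟨nm, hnm, A, B, hA, hB, (one_lt_div (hV nm hnm)).1 hv⟩

/-! ### Type I error -/

lemma one_le_Gnm {N M n m : ℕ} (hn : n ≤ N) (hm : m ≤ M) : 1 ≤ Gnm N M n m :=
  Nat.mul_pos (Nat.choose_pos hn) (Nat.choose_pos hm)

lemma one_lt_NMG {N M n m : ℕ} (hN : 2 ≤ N) (hM : 2 ≤ M) (hn : n ≤ N) (hm : m ≤ M) :
    (1 : ℝ) < (N : ℝ) * M * Gnm N M n m := by
  have h := one_le_Gnm hn hm
  have : 1 < N * M * Gnm N M n m := by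
    calc 1 < 2 * 2 * 1 := by norm_num
      _ ≤ N * M * Gnm N M n m := Nat.mul_le_mul (Nat.mul_le_mul hN hM) h
  exact_mod_cast this

lemma Vnm_pos {N M n m : ℕ} (hN : 2 ≤ N) (hM : 2 ≤ M) (hn : n ≤ N) (hm : m ≤ M) :
    0 < Vnm N M n m :=
  Real.sqrt_pos.2 (mul_pos two_pos (Real.log_pos (one_lt_NMG hN hM hn hm)))

lemma Vnm_sq {N M n m : ℕ} (hN : 2 ≤ N) (hM : 2 ≤ M) (hn : n ≤ N) (hm : m ≤ M) :
    Vnm N M n m ^ 2 = 2 * Real.log ((N : ℝ) * M * Gnm N M n m) :=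
  Real.sq_sqrt (mul_pos two_pos (Real.log_pos (one_lt_NMG hN hM hn hm))).le

lemma exp_Vnm {N M n m : ℕ} (hN : 2 ≤ N) (hM : 2 ≤ M) (hn : n ≤ N) (hm : m ≤ M) :
    Real.exp (-Vnm N M n m ^ 2 / 2) = ((N : ℝ) * M * Gnm N M n m)⁻¹ := by
  have h := one_lt_NMG hN hM hn hm
  rw [Vnm_sq hN hM hn hm, show ∀ L : ℝ, -(2 * L) / 2 = -L by intro L; ring, Real.exp_neg,
    Real.exp_log (by linarith)]

/-- Since all block sizes in `K` are at most a fraction `δ` of the matrix sizes, `K` has at most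
`δ² N M` elements. This gains the small factor which the plain Chernoff union bound lacks. -/
lemma alphaErr_le (N M : ℕ) (K : Finset (ℕ × ℕ)) (H δ : ℝ) (hN : 2 ≤ N) (hM : 2 ≤ M)
    (hH : 0 ≤ H) (hδ : 0 ≤ δ)
    (hb : ∀ nm ∈ K, 1 ≤ nm.1 ∧ nm.1 ≤ N ∧ 1 ≤ nm.2 ∧ nm.2 ≤ M)
    (hK : ∀ nm ∈ K, (nm.1 : ℝ) ≤ δ * N ∧ (nm.2 : ℝ) ≤ δ * M) :
    alphaErr N M (psiStar N M K H) ≤ Real.exp (-H ^ 2 / 2) + δ ^ 2 := by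
  have hN0 : (0 : ℝ) < N := by exact_mod_cast (by omega : 0 < N)
  have hM0 : (0 : ℝ) < M := by exact_mod_cast (by omega : 0 < M)
  set μ := matLaw N M fun _ _ => 0 with hμ
  set blocks : ℕ × ℕ → Finset (Finset (Fin N) × Finset (Fin M)) := fun nm =>
    Finset.powersetCard nm.1 Finset.univ ×ˢ Finset.powersetCard nm.2 Finset.univ with hblocks
  set E : ℕ × ℕ → Finset (Fin N) × Finset (Fin M) → Set ((Fin N × Fin M) → ℝ) := fun nm p =>
    {y | Vnm N M nm.1 nm.2 ≤ YC N M y p.1 p.2} with hE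
  have hint : alphaErr N M (psiStar N M K H) ≤
      μ.real ({y | H ≤ tlin N M y} ∪ ⋃ nm ∈ K, ⋃ p ∈ blocks nm, E nm p) := by
    refine integral_le_measureReal μ _ _ (psiStar_nonneg N M K H) (psiStar_le_one N M K H) ?_
    intro y hy
    by_contra hne
    apply hy
    rcases exists_of_psiStar_ne_zero N M K H y (fun nm hnm =>
      Vnm_pos hN hM (hb nm hnm).2.1 (hb nm hnm).2.2.2) hne with h | ⟨nm, hnm, A, B, hA, hB, h⟩
    · exact Or.inl h.le
    · refine Or.inr (Set.mem_biUnion hnm (Set.mem_biUnion (x := (A, B)) ?_ h.le))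
      simp [hblocks, Finset.mem_powersetCard, hA, hB]
  have hlin : μ.real {y | H ≤ tlin N M y} ≤ Real.exp (-H ^ 2 / 2) := by
    have hne : (Finset.univ : Finset (Fin N × Fin M)).Nonempty :=
      ⟨(⟨0, by omega⟩, ⟨0, by omega⟩), Finset.mem_univ _⟩
    simpa only [tlin_eq] using block_upper N M Finset.univ hne H hH
  have hblock : ∀ nm ∈ K, μ.real (⋃ p ∈ blocks nm, E nm p) ≤ ((N : ℝ) * M)⁻¹ := by
    intro nm hnm
    obtain ⟨hn1, hnN, hm1, hmM⟩ := hb nm hnm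
    refine (measureReal_biUnion_finset_le _ _).trans ?_
    have hterm : ∀ p ∈ blocks nm, μ.real (E nm p) ≤ ((N : ℝ) * M * Gnm N M nm.1 nm.2)⁻¹ := by
      rintro ⟨A, B⟩ hp
      simp only [hblocks, Finset.mem_product, Finset.mem_powersetCard] at hp
      have hne : (A ×ˢ B).Nonempty := by
        refine Finset.Nonempty.product ?_ ?_
        · exact Finset.card_pos.1 (by omega)
        · exact Finset.card_pos.1 (by omega)
      have h := block_upper N M (A ×ˢ B) hne (Vnm N M nm.1 nm.2) (Real.sqrt_nonneg _)
      rw [exp_Vnm hN hM hnN hmM] at h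
      simpa only [hE, YC_eq] using h
    refine (Finset.sum_le_sum hterm).trans (le_of_eq ?_)
    have hcard : (blocks nm).card = Gnm N M nm.1 nm.2 := by
      simp [hblocks, Gnm, Finset.card_product, Finset.card_powersetCard]
    have hG : (0 : ℝ) < Gnm N M nm.1 nm.2 := by
      exact_mod_cast one_le_Gnm hnN hmM
    rw [Finset.sum_const, hcard, nsmul_eq_mul]
    field_simp
  have hKcard : (K.card : ℝ) ≤ δ * N * (δ * M) := by
    have hsub : K ⊆ Finset.Icc 1 ⌊δ * N⌋₊ ×ˢ Finset.Icc 1 ⌊δ * M⌋₊ := by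
      intro nm hnm
      obtain ⟨hn1, -, hm1, -⟩ := hb nm hnm
      simp only [Finset.mem_product, Finset.mem_Icc]
      exact ⟨⟨hn1, Nat.le_floor (hK nm hnm).1⟩, ⟨hm1, Nat.le_floor (hK nm hnm).2⟩⟩
    have hc := Finset.card_le_card hsub
    rw [Finset.card_product, Nat.card_Icc, Nat.card_Icc, Nat.add_sub_cancel,
      Nat.add_sub_cancel] at hc
    calc (K.card : ℝ) ≤ (⌊δ * N⌋₊ : ℝ) * (⌊δ * M⌋₊ : ℝ) := by exact_mod_cast hc
      _ ≤ δ * N * (δ * M) :=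
        mul_le_mul (Nat.floor_le (by positivity)) (Nat.floor_le (by positivity))
          (by positivity) (by positivity)
  have hscan : μ.real (⋃ nm ∈ K, ⋃ p ∈ blocks nm, E nm p) ≤ δ ^ 2 := by
    refine (measureReal_biUnion_finset_le _ _).trans ((Finset.sum_le_sum hblock).trans ?_)
    rw [Finset.sum_const, nsmul_eq_mul, ← div_eq_mul_inv, div_le_iff₀ (by positivity)]
    linarith [hKcard]
  exact hint.trans ((measureReal_union_le _ _).trans (add_le_add hlin hscan))

/-! ### Type II error -/

lemma SAlt_sum_le {N M n m : ℕ} {a : ℝ} {S : Fin N → Fin M → ℝ} {A : Finset (Fin N)}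
    {B : Finset (Fin M)} (hA : A.card = n) (hB : B.card = m)
    (hS : ∀ i j, i ∈ A → j ∈ B → a ≤ S i j) :
    (n : ℝ) * m * a ≤ ∑ ij ∈ A ×ˢ B, S ij.1 ij.2 := by
  have h : ∑ ij ∈ A ×ˢ B, a ≤ ∑ ij ∈ A ×ˢ B, S ij.1 ij.2 := by
    refine Finset.sum_le_sum fun ij hij => ?_
    rw [Finset.mem_product] at hij
    exact hS _ _ hij.1 hij.2
  simpa [Finset.card_product, hA, hB] using h

lemma betaErr_lin_le (N M n m : ℕ) (K : Finset (ℕ × ℕ)) (H a x : ℝ) (hN : 1 ≤ N) (hM : 1 ≤ M)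
    (hx : 0 ≤ x) (S : Fin N → Fin M → ℝ) (hS : S ∈ SAlt N M n m a)
    (hsep : H + x ≤ a * √((n : ℝ) * m * ((n : ℝ) / N) * ((m : ℝ) / M))) :
    betaErr N M S (psiStar N M K H) ≤ Real.exp (-x ^ 2 / 2) := by
  obtain ⟨A, B, hA, hB, hge, hzero⟩ := hS
  have hN0 : (0 : ℝ) < N := by exact_mod_cast hN
  have hM0 : (0 : ℝ) < M := by exact_mod_cast hM
  have hint : betaErr N M S (psiStar N M K H) ≤ (matLaw N M S).real {y | tlin N M y ≤ H} := by
    refine integral_le_measureReal _ _ _ (fun y => ?_) (fun y => ?_) (fun y hy => ?_)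
    · linarith [psiStar_le_one N M K H y]
    · linarith [psiStar_nonneg N M K H y]
    · rw [psiStar_eq_one_of_lin N M K H y (not_le.1 hy), sub_self]
  refine hint.trans ?_
  have hne : (Finset.univ : Finset (Fin N × Fin M)).Nonempty :=
    ⟨(⟨0, by omega⟩, ⟨0, by omega⟩), Finset.mem_univ _⟩
  have hsum : ∑ ij : Fin N × Fin M, S ij.1 ij.2 = ∑ ij ∈ A ×ˢ B, S ij.1 ij.2 := by
    refine (Finset.sum_subset (Finset.subset_univ _) fun ij _ hij => ?_).symm
    exact hzero _ _ (by simpa [Finset.mem_product] using hij)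
  have hsqrt : √((n : ℝ) * m * ((n : ℝ) / N) * ((m : ℝ) / M)) = n * m / √((N : ℝ) * M) := by
    rw [show (n : ℝ) * m * ((n : ℝ) / N) * ((m : ℝ) / M) = ((n : ℝ) * m) ^ 2 / ((N : ℝ) * M) by
      field_simp, Real.sqrt_div (by positivity), Real.sqrt_sq (by positivity)]
  have h := block_lower N M S Finset.univ hne x H hx (by
    rw [hsum]
    refine hsep.trans ?_
    rw [hsqrt, ← mul_div_assoc]
    simp only [Finset.card_univ, Fintype.card_prod, Fintype.card_fin, Nat.cast_mul]
    gcongr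
    linarith [SAlt_sum_le hA hB hge])
  simpa only [tlin_eq] using h

lemma betaErr_scan_le (N M : ℕ) (nm : ℕ × ℕ) (K : Finset (ℕ × ℕ)) (H a x : ℝ) (hN : 2 ≤ N)
    (hM : 2 ≤ M) (hnm : nm ∈ K) (hb : 1 ≤ nm.1 ∧ nm.1 ≤ N ∧ 1 ≤ nm.2 ∧ nm.2 ≤ M)
    (hx : 0 ≤ x) (S : Fin N → Fin M → ℝ) (hS : S ∈ SAlt N M nm.1 nm.2 a)
    (hsep : Vnm N M nm.1 nm.2 + x ≤ a * √((nm.1 : ℝ) * nm.2)) :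
    betaErr N M S (psiStar N M K H) ≤ Real.exp (-x ^ 2 / 2) := by
  obtain ⟨A, B, hA, hB, hge, -⟩ := hS
  obtain ⟨hn1, hnN, hm1, hmM⟩ := hb
  have hint : betaErr N M S (psiStar N M K H) ≤
      (matLaw N M S).real {y | YC N M y A B ≤ Vnm N M nm.1 nm.2} := by
    refine integral_le_measureReal _ _ _ (fun y => ?_) (fun y => ?_) (fun y hy => ?_)
    · linarith [psiStar_le_one N M K H y]
    · linarith [psiStar_nonneg N M K H y]
    · rw [psiStar_eq_one_of_scan N M K H y nm hnm A B hA hB (Vnm_pos hN hM hnN hmM)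
        (not_le.1 hy), sub_self]
  refine hint.trans ?_
  have hne : (A ×ˢ B).Nonempty :=
    Finset.Nonempty.product (Finset.card_pos.1 (by omega)) (Finset.card_pos.1 (by omega))
  have hpos : (0 : ℝ) < (nm.1 : ℝ) * nm.2 := by
    exact_mod_cast Nat.mul_pos hn1 hm1
  have h := block_lower N M S (A ×ˢ B) hne x (Vnm N M nm.1 nm.2) hx (by
    refine hsep.trans ?_
    rw [Finset.card_product, hA, hB, Nat.cast_mul, le_div_iff₀ (Real.sqrt_pos.2 hpos), mul_assoc,
      Real.mul_self_sqrt hpos.le]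
    linarith [SAlt_sum_le hA hB hge])
  simpa only [YC_eq] using h

lemma betaMaxAdapt_le (N M : ℕ) (K : Finset (ℕ × ℕ)) (a : ℕ × ℕ → ℝ) (H ε : ℝ) (hε : 0 ≤ ε)
    (h : ∀ nm ∈ K, ∀ S ∈ SAlt N M nm.1 nm.2 (a nm), betaErr N M S (psiStar N M K H) ≤ ε) :
    betaMaxAdapt N M K a (psiStar N M K H) ≤ ε := by
  refine Real.sSup_le ?_ hε
  rintro _ ⟨S, hS, rfl⟩
  simp only [Set.mem_iUnion] at hS
  obtain ⟨nm, hnm, hS⟩ := hS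
  exact h nm hnm S hS

lemma betaMaxAdapt_nonneg (N M : ℕ) (K : Finset (ℕ × ℕ)) (a : ℕ × ℕ → ℝ) (H : ℝ) :
    0 ≤ betaMaxAdapt N M K a (psiStar N M K H) := by
  refine Real.sSup_nonneg ?_
  rintro _ ⟨S, -, rfl⟩
  exact integral_nonneg fun y => sub_nonneg.2 (psiStar_le_one N M K H y)

/-! ### Size of the scan threshold -/

lemma log_choose_le {N n : ℕ} (hn : 1 ≤ n) (hnN : n ≤ N) :
    Real.log (N.choose n) ≤ n * Real.log ((N : ℝ) / n) + n := by
  have hn0 : (0 : ℝ) < n := by exact_mod_cast hn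
  have hN0 : (0 : ℝ) < N := by exact_mod_cast (by omega : 0 < N)
  have hc : (0 : ℝ) < N.choose n := by exact_mod_cast Nat.choose_pos hnN
  have h1 : (N.choose n : ℝ) ≤ (N : ℝ) ^ n / n.factorial := Nat.choose_le_pow_div n N
  have h2 : (n : ℝ) ^ n / n.factorial ≤ Real.exp n := Real.pow_div_factorial_le_exp _ hn0.le n
  have h3 : (N.choose n : ℝ) ≤ ((N : ℝ) / n) ^ n * Real.exp n := by
    refine h1.trans ?_
    have : (N : ℝ) ^ n / n.factorial = ((N : ℝ) / n) ^ n * ((n : ℝ) ^ n / n.factorial) := by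
      rw [div_pow]; field_simp
    rw [this]
    gcongr
  calc Real.log (N.choose n) ≤ Real.log (((N : ℝ) / n) ^ n * Real.exp n) := Real.log_le_log hc h3
    _ = n * Real.log ((N : ℝ) / n) + n := by
      rw [Real.log_mul (by positivity) (by positivity), Real.log_pow, Real.log_exp]

lemma Vnm_sq_le {N M n m : ℕ} {η : ℝ} (hN : 2 ≤ N) (hM : 2 ≤ M) (hn : 1 ≤ n) (hnN : n ≤ N)
    (hm : 1 ≤ m) (hmM : m ≤ M)
    (h1 : Real.log N ≤ η * (n * Real.log ((N : ℝ) / n)))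
    (h2 : Real.log M ≤ η * (m * Real.log ((M : ℝ) / m)))
    (h3 : (n : ℝ) ≤ η * (n * Real.log ((N : ℝ) / n)))
    (h4 : (m : ℝ) ≤ η * (m * Real.log ((M : ℝ) / m))) :
    Vnm N M n m ^ 2 ≤
      2 * ((1 + 2 * η) * (n * Real.log ((N : ℝ) / n) + m * Real.log ((M : ℝ) / m))) := by
  have hN0 : (N : ℝ) ≠ 0 := by exact_mod_cast (by omega : N ≠ 0)
  have hM0 : (M : ℝ) ≠ 0 := by exact_mod_cast (by omega : M ≠ 0)
  have hc1 : (N.choose n : ℝ) ≠ 0 := by exact_mod_cast (Nat.choose_pos hnN).ne'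
  have hc2 : (M.choose m : ℝ) ≠ 0 := by exact_mod_cast (Nat.choose_pos hmM).ne'
  rw [Vnm_sq hN hM hnN hmM, Gnm, Nat.cast_mul, Real.log_mul (mul_ne_zero hN0 hM0)
    (mul_ne_zero hc1 hc2), Real.log_mul hN0 hM0, Real.log_mul hc1 hc2]
  nlinarith [log_choose_le hn hnN, log_choose_le hm hmM]

lemma le_log_of_ratio {N n : ℕ} {R : ℝ} (hn : 1 ≤ n) (hnN : n ≤ N)
    (h : (n : ℝ) / N < Real.exp (-R)) : R ≤ Real.log ((N : ℝ) / n) := by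
  have hn0 : (0 : ℝ) < n := by exact_mod_cast hn
  have hN0 : (0 : ℝ) < N := by exact_mod_cast (by omega : 0 < N)
  have h1 := Real.log_lt_log (by positivity) h
  rw [Real.log_exp, ← neg_neg (Real.log ((n : ℝ) / N)), ← Real.log_inv, inv_div] at h1
  linarith

/-- Under (ii) the mean of the block statistic exceeds the scan threshold. With
`D = n log (N/n) + m log (M/m)`, the squared threshold is at most `(1 + c) D` (this is `Vnm_sq_le`
for `η = (c - 1) / 4`), while the squared mean is at least `2 c D`; the gap is then bounded below
using `D ≥ R`. -/
lemma scan_separation {N M n m : ℕ} {a c R : ℝ} (hc : 1 < c) (ha : 0 < a) (hN : 2 ≤ N)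
    (hM : 2 ≤ M) (hn : 1 ≤ n) (hnN : n ≤ N) (hm : 1 ≤ m) (hmM : m ≤ M)
    (hR : 0 < R) (hRη : 4 / (c - 1) ≤ R)
    (hRn : R ≤ Real.log ((N : ℝ) / n)) (hRm : R ≤ Real.log ((M : ℝ) / m))
    (hlog : Real.log N / ((n : ℝ) * Real.log ((N : ℝ) / n)) +
      Real.log M / ((m : ℝ) * Real.log ((M : ℝ) / m)) < (c - 1) / 4)
    (hcond : c ≤ a ^ 2 * ((n : ℝ) * m) /
      (2 * ((n : ℝ) * Real.log ((N : ℝ) / n) + (m : ℝ) * Real.log ((M : ℝ) / m)))) :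
    Vnm N M n m + (√c - √((1 + c) / 2)) * √(2 * R) ≤ a * √((n : ℝ) * m) := by
  have hn1 : (1 : ℝ) ≤ n := by exact_mod_cast hn
  have hm1 : (1 : ℝ) ≤ m := by exact_mod_cast hm
  have hL1 : R ≤ n * Real.log ((N : ℝ) / n) := by nlinarith
  have hL2 : R ≤ m * Real.log ((M : ℝ) / m) := by nlinarith
  have hlogN : 0 ≤ Real.log (N : ℝ) := Real.log_natCast_nonneg N
  have hlogM : 0 ≤ Real.log (M : ℝ) := Real.log_natCast_nonneg M
  have hηR : 1 ≤ (c - 1) / 4 * R := by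
    rw [div_le_iff₀ (by linarith)] at hRη
    linarith
  have hη : 0 < (c - 1) / 4 := by linarith
  have h3 : (n : ℝ) ≤ (c - 1) / 4 * (n * Real.log ((N : ℝ) / n)) := by
    nlinarith [mul_le_mul_of_nonneg_left hRn hη.le]
  have h4 : (m : ℝ) ≤ (c - 1) / 4 * (m * Real.log ((M : ℝ) / m)) := by
    nlinarith [mul_le_mul_of_nonneg_left hRm hη.le]
  set L1 := (n : ℝ) * Real.log ((N : ℝ) / n) with hL1def
  set L2 := (m : ℝ) * Real.log ((M : ℝ) / m) with hL2def
  have hq1 : 0 ≤ Real.log N / L1 := div_nonneg hlogN (by linarith)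
  have hq2 : 0 ≤ Real.log M / L2 := div_nonneg hlogM (by linarith)
  have h1 : Real.log N ≤ (c - 1) / 4 * L1 := by
    rw [← div_le_iff₀ (by linarith)]; linarith
  have h2 : Real.log M ≤ (c - 1) / 4 * L2 := by
    rw [← div_le_iff₀ (by linarith)]; linarith
  have hV : Vnm N M n m ≤ √((1 + c) / 2) * √(2 * (L1 + L2)) := by
    rw [← Real.sqrt_mul (by linarith)]
    refine Real.le_sqrt_of_sq_le ((Vnm_sq_le hN hM hn hnN hm hmM h1 h2 h3 h4).trans (le_of_eq ?_))
    ring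
  have hmean : √c * √(2 * (L1 + L2)) ≤ a * √((n : ℝ) * m) := by
    rw [← Real.sqrt_mul (by linarith), ← Real.sqrt_sq ha.le, ← Real.sqrt_mul (by positivity)]
    refine Real.sqrt_le_sqrt ?_
    rwa [le_div_iff₀ (by linarith)] at hcond
  have hsqrt : √((1 + c) / 2) ≤ √c := Real.sqrt_le_sqrt (by linarith)
  have hD : √(2 * R) ≤ √(2 * (L1 + L2)) := Real.sqrt_le_sqrt (by linarith)
  nlinarith [mul_le_mul_of_nonneg_left hD (sub_nonneg.2 hsqrt)]

/-! ### Passage to the limit -/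

/-- Gaussian tails at a large enough argument are below any prescribed level. -/
lemma exists_exp_le (ε : ℝ) (hε : 0 < ε) :
    ∃ x₀ : ℝ, 0 < x₀ ∧ ∀ x, x₀ ≤ x → Real.exp (-x ^ 2 / 2) ≤ ε := by
  have h : Tendsto (fun x : ℝ => Real.exp (-x ^ 2 / 2)) atTop (𝓝 0) := by
    refine Real.tendsto_exp_atBot.comp ?_
    have h2 : Tendsto (fun x : ℝ => x ^ 2 / 2) atTop atTop :=
      (tendsto_pow_atTop two_ne_zero).atTop_div_const two_pos
    refine (tendsto_neg_atTop_atBot.comp h2).congr fun x => ?_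
    simp [neg_div]
  obtain ⟨x₀, hx₀⟩ := eventually_atTop.1 (h.eventually (ge_mem_nhds hε))
  exact ⟨max x₀ 1, by positivity, fun x hx => hx₀ x ((le_max_left _ _).trans hx)⟩

/-- Theorem 3 (adaptive upper bounds): under the uniform conditions on `K_{NM}`,
if either (i) `min_{(n,m) ∈ K} a_{nm}² n m (n/N)(m/M) → ∞` (with `H → ∞`,
`H < c a_{nm} √(n m (n/N)(m/M))` for all `(n,m) ∈ K` and some fixed `c < 1`) or
(ii) `liminf min_{(n,m) ∈ K} a_{nm}² n m / (2(n log(N/n) + m log(M/m))) > 1`,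
then `γ_{NM,a}(ψ*_{NM}) → 0` for `ψ*_{NM} = max{ψ^lin_H, ψ^max_{NM}}`. -/
theorem stmt5 (N M : ℕ → ℕ) (K : ℕ → Finset (ℕ × ℕ)) (a : ℕ → ℕ × ℕ → ℝ) (H : ℕ → ℝ)
    (hb : ∀ t, ∀ nm ∈ K t, 1 ≤ nm.1 ∧ nm.1 ≤ N t ∧ 1 ≤ nm.2 ∧ nm.2 ≤ M t)
    (ha : ∀ t, ∀ nm ∈ K t, 0 < a t nm)
    (hN : Tendsto N atTop atTop) (hM : Tendsto M atTop atTop)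
    (hunif : ∀ ε : ℝ, 0 < ε → ∀ᶠ t in atTop, ∀ nm ∈ K t,
      1 / (nm.1 : ℝ) + 1 / (nm.2 : ℝ) + (nm.1 : ℝ) / N t + (nm.2 : ℝ) / M t < ε)
    (hunif' : ∀ ε : ℝ, 0 < ε → ∀ᶠ t in atTop, ∀ nm ∈ K t,
      Real.log (N t) / ((nm.1 : ℝ) * Real.log ((N t : ℝ) / nm.1)) +
        Real.log (M t) / ((nm.2 : ℝ) * Real.log ((M t : ℝ) / nm.2)) < ε)
    (hH : Tendsto H atTop atTop)
    (hcond :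
      ((∀ c : ℝ, ∀ᶠ t in atTop, ∀ nm ∈ K t,
          c ≤ a t nm ^ 2 *
            ((nm.1 : ℝ) * nm.2 * ((nm.1 : ℝ) / N t) * ((nm.2 : ℝ) / M t))) ∧
        ∃ c : ℝ, c < 1 ∧ ∀ t, ∀ nm ∈ K t,
          H t < c * (a t nm * Real.sqrt
            ((nm.1 : ℝ) * nm.2 * ((nm.1 : ℝ) / N t) * ((nm.2 : ℝ) / M t)))) ∨
      ∃ c : ℝ, 1 < c ∧ ∀ᶠ t in atTop, ∀ nm ∈ K t,
        c ≤ a t nm ^ 2 * ((nm.1 : ℝ) * nm.2) /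
          (2 * ((nm.1 : ℝ) * Real.log ((N t : ℝ) / nm.1) +
            (nm.2 : ℝ) * Real.log ((M t : ℝ) / nm.2)))) :
    Tendsto (fun t =>
      alphaErr (N t) (M t) (fun y =>
          max (psiLin (N t) (M t) (H t) y) (psiAdapt (N t) (M t) (K t) y)) +
        betaMaxAdapt (N t) (M t) (K t) (a t) (fun y =>
          max (psiLin (N t) (M t) (H t) y) (psiAdapt (N t) (M t) (K t) y)))
      atTop (nhds 0) := by
  change Tendsto (fun t =>
    alphaErr (N t) (M t) (psiStar (N t) (M t) (K t) (H t)) +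
      betaMaxAdapt (N t) (M t) (K t) (a t) (psiStar (N t) (M t) (K t) (H t))) atTop (𝓝 0)
  have hN2 : ∀ᶠ t in atTop, 2 ≤ N t := hN.eventually_ge_atTop 2
  have hM2 : ∀ᶠ t in atTop, 2 ≤ M t := hM.eventually_ge_atTop 2
  have hratio : ∀ δ : ℝ, 0 < δ → ∀ᶠ t in atTop, ∀ nm ∈ K t,
      (nm.1 : ℝ) / N t < δ ∧ (nm.2 : ℝ) / M t < δ := by
    intro δ hδ
    filter_upwards [hunif δ hδ] with t ht nm hnm
    have h := ht nm hnm
    have h1 : (0 : ℝ) ≤ 1 / (nm.1 : ℝ) := by positivity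
    have h2 : (0 : ℝ) ≤ 1 / (nm.2 : ℝ) := by positivity
    have h3 : (0 : ℝ) ≤ (nm.1 : ℝ) / N t := by positivity
    have h4 : (0 : ℝ) ≤ (nm.2 : ℝ) / M t := by positivity
    constructor <;> linarith
  have halpha : ∀ ε : ℝ, 0 < ε → ∀ᶠ t in atTop,
      alphaErr (N t) (M t) (psiStar (N t) (M t) (K t) (H t)) ≤ ε := by
    intro ε hε
    obtain ⟨x₀, hx₀, hexp⟩ := exists_exp_le (ε / 2) (by linarith)
    have hδ : 0 < √(ε / 2) := Real.sqrt_pos.2 (by linarith)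
    filter_upwards [hN2, hM2, hH.eventually_ge_atTop x₀, hratio _ hδ] with t h1 h2 h3 h4
    have hN0 : (0 : ℝ) < N t := by exact_mod_cast (by omega : 0 < N t)
    have hM0 : (0 : ℝ) < M t := by exact_mod_cast (by omega : 0 < M t)
    have h := alphaErr_le (N t) (M t) (K t) (H t) (√(ε / 2)) h1 h2 (hx₀.le.trans h3) hδ.le (hb t)
      (fun nm hnm => ⟨((div_lt_iff₀ hN0).1 (h4 nm hnm).1).le,
        ((div_lt_iff₀ hM0).1 (h4 nm hnm).2).le⟩)
    rw [Real.sq_sqrt (by linarith)] at h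
    linarith [hexp (H t) h3]
  have hbeta : ∀ ε : ℝ, 0 < ε → ∀ᶠ t in atTop,
      betaMaxAdapt (N t) (M t) (K t) (a t) (psiStar (N t) (M t) (K t) (H t)) ≤ ε := by
    intro ε hε
    obtain ⟨x₀, hx₀, hexp⟩ := exists_exp_le ε hε
    rcases hcond with ⟨hinf, c, hc, hHc⟩ | ⟨c, hc, hlim⟩
    · have hc' : 0 < 1 - c := by linarith
      -- The mean of the linear statistic is at least `x₀ / (1 - c)`, and it exceeds `H` by a
      -- factor `1 - c` of itself.
      filter_upwards [hN2, hM2, hinf ((x₀ / (1 - c)) ^ 2)] with t h1 h2 h3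
      refine betaMaxAdapt_le _ _ _ _ _ _ hε.le fun nm hnm S hS => ?_
      refine (betaErr_lin_le (N t) (M t) nm.1 nm.2 (K t) (H t) (a t nm) x₀ (by omega) (by omega)
        hx₀.le S hS ?_).trans (hexp x₀ le_rfl)
      have hp := ha t nm hnm
      have hlow := h3 nm hnm
      have hHlt := hHc t nm hnm
      set q := (nm.1 : ℝ) * nm.2 * ((nm.1 : ℝ) / N t) * ((nm.2 : ℝ) / M t) with hq
      have hq0 : 0 ≤ q := by positivity
      have hmu : x₀ / (1 - c) ≤ a t nm * √q := by
        refine le_of_sq_le_sq ?_ (by positivity)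
        rwa [mul_pow, Real.sq_sqrt hq0]
      rw [div_le_iff₀ hc'] at hmu
      linarith
    · have hκ : 0 < √c - √((1 + c) / 2) :=
        sub_pos.2 (Real.sqrt_lt_sqrt (by linarith) (by linarith))
      set κ := √c - √((1 + c) / 2) with hκdef
      have hη : 0 < (c - 1) / 4 := by linarith
      set R := max (4 / (c - 1)) ((x₀ / κ) ^ 2 / 2) with hR
      have hRpos : 0 < R := lt_max_of_lt_left (div_pos four_pos (by linarith))
      have hx : x₀ ≤ κ * √(2 * R) := by
        rw [mul_comm, ← div_le_iff₀ hκ]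
        refine Real.le_sqrt_of_sq_le ?_
        linarith [le_max_right (4 / (c - 1)) ((x₀ / κ) ^ 2 / 2)]
      filter_upwards [hN2, hM2, hlim, hunif' _ hη, hratio _ (Real.exp_pos (-R))]
        with t h1 h2 h3 h4 h5
      refine betaMaxAdapt_le _ _ _ _ _ _ hε.le fun nm hnm S hS => ?_
      obtain ⟨hn1, hnN, hm1, hmM⟩ := hb t nm hnm
      exact (betaErr_scan_le (N t) (M t) nm (K t) (H t) (a t nm) (κ * √(2 * R)) h1 h2 hnm
        (hb t nm hnm) (hx₀.le.trans hx) S hS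
        (scan_separation hc (ha t nm hnm) h1 h2 hn1 hnN hm1 hmM hRpos (le_max_left _ _)
          (le_log_of_ratio hn1 hnN (h5 nm hnm).1) (le_log_of_ratio hm1 hmM (h5 nm hnm).2)
          (h4 nm hnm) (h3 nm hnm))).trans (hexp _ hx)
  refine tendsto_order.2 ⟨fun b hb0 => Eventually.of_forall fun t => ?_, fun b hb0 => ?_⟩
  · refine lt_of_lt_of_le hb0 (add_nonneg ?_ (betaMaxAdapt_nonneg _ _ _ _ _))
    exact integral_nonneg fun y => psiStar_nonneg _ _ _ _ y
  · filter_upwards [halpha (b / 3) (by linarith), hbeta (b / 3) (by linarith)] with t h1 h2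
    linarith
end
end

section
/- (Upper bounds for rectangle detection.) Assume N, M, n, m → ∞, p = n/N → 0, q = m/M → 0. If liminf a² n m / (2(log(1/p) + log(1/q))) > 1 and η = η_{nm} is chosen so that η → 0, nη → ∞, mη → ∞ and |log η| = o(|log(pq)|), then the grid scan test ψ_Z satisfies γ^rect_{nm,a}(ψ_Z) → 0, i.e. α(ψ_Z) → 0 and sup_{S∈S^rect_{nm,a}} β(ψ_Z,S) → 0. -/
/-!
Each rectangle statistic `Z_{kl}` is a linear form in independent Gaussians whose squared
coefficients sum to one, so it is `N(μ, 1)` with `μ` its value at the signal (`map_ZrectStat`).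

First-type error (`alphaErr_le`): a union bound over the `K L` grid rectangles together with the
tail bound `P(ξ > x) ≤ exp (-x² / 2) / x` at `x = √(2 log (K L))` gives `α ≤ 1 / √(2 log (K L))`,
and `K`, `L → ∞` (`tendsto_gridMax`).

Second-type error (`betaErr_le`): once `n η, m η ≥ 1`, every offset lies within `n η` (resp. `m η`)
above a grid offset, so some grid rectangle meets the support of the signal in at least
`n m (1 - η)²` cells and its statistic has mean at least `a √(n m) (1 - η)²`
(`exists_large_mean`). With `Λ = log (1/p) + log (1/q)`, the bounds `K ≤ 1 / (p η)` and
`L ≤ 1 / (q η)` make the threshold at most `√(2 Λ (1 + o(1)))` (`thr_le`), whereas the liminf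
condition gives `a √(n m) ≥ √(2 c Λ)` eventually, for some `c > 1`. The mean thus exceeds the
threshold by an amount `G → ∞` that does not depend on the signal, and Chebyshev's inequality
yields `β ≤ 1 / G²` uniformly over the alternative.
-/

open MeasureTheory ProbabilityTheory Filter Topology
open scoped Classical

noncomputable section

/-- Rectangle alternative class `S^rect_{nm,a}`: some `n × m` rectangle
`E_{kl} = {k+1,…,k+n} × {l+1,…,l+m}` has all entries `≥ a`, zero outside. -/
def SAltRect (N M n m : ℕ) (a : ℝ) : Set (Fin N → Fin M → ℝ) :=
  {S | ∃ k l : ℕ, k + n ≤ N ∧ l + m ≤ M ∧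
    (∀ (i : Fin N) (j : Fin M),
        (k ≤ i.val ∧ i.val < k + n ∧ l ≤ j.val ∧ j.val < l + m) → a ≤ S i j) ∧
    ∀ (i : Fin N) (j : Fin M),
        ¬(k ≤ i.val ∧ i.val < k + n ∧ l ≤ j.val ∧ j.val < l + m) → S i j = 0}

/-- Maximal second-type error over the rectangle alternative. -/
def betaMaxRect (N M n m : ℕ) (a : ℝ) (ψ : ((Fin N × Fin M) → ℝ) → ℝ) : ℝ :=
  sSup ((fun S => betaErr N M S ψ) '' SAltRect N M n m a)

/-- Normalized sum over the rectangle with upper-left offset `(k,l)` and size `n × m`. -/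
def ZrectStat (N M n m : ℕ) (y : (Fin N × Fin M) → ℝ) (k l : ℕ) : ℝ :=
  (∑ ij : Fin N × Fin M,
    if k ≤ ij.1.val ∧ ij.1.val < k + n ∧ l ≤ ij.2.val ∧ ij.2.val < l + m
    then y ij else 0) / Real.sqrt ((n : ℝ) * m)

/-- Grid offset `n_k = ⌈(k-1) n η⌉`. -/
def gridPt (n k : ℕ) (η : ℝ) : ℕ := ⌈((k : ℝ) - 1) * n * η⌉₊

/-- `K`, the largest `k ≥ 1` with `n_k ≤ N - n` (grid size along a dimension). -/
def gridMax (N n : ℕ) (η : ℝ) : ℕ :=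
  Nat.findGreatest (fun k => 1 ≤ k ∧ gridPt n k η + n ≤ N) (N + 2)

/-- Grid scan statistic `Z = max_{1 ≤ k ≤ K, 1 ≤ l ≤ L} Z_{kl}`. -/
def Zgrid (N M n m : ℕ) (η : ℝ) (y : (Fin N × Fin M) → ℝ) : ℝ :=
  sSup {v | ∃ k ∈ Finset.Icc 1 (gridMax N n η), ∃ l ∈ Finset.Icc 1 (gridMax M m η),
    v = ZrectStat N M n m y (gridPt n k η) (gridPt m l η)}

/-- Grid scan test `ψ_Z = 1{Z > √(2 log(K L))}`. -/
def psiZ (N M n m : ℕ) (η : ℝ) (y : (Fin N × Fin M) → ℝ) : ℝ :=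
  if Real.sqrt (2 * Real.log ((gridMax N n η : ℝ) * gridMax M m η)) <
      Zgrid N M n m η y then 1 else 0

/-! ### Gaussian facts -/

/-- A linear form of a vector of independent unit-variance Gaussians is Gaussian. -/
lemma map_linearForm_pi_gaussianReal {ι : Type*} [Fintype ι] (c μ : ι → ℝ) :
    (Measure.pi fun i => gaussianReal (μ i) 1).map (fun y => ∑ i, c i * y i) =
      gaussianReal (∑ i, c i * μ i) (∑ i, c i ^ 2).toNNReal := by
  have hid : ∀ i, MemLp (fun x : ℝ => c i * x) 2 (gaussianReal (μ i) 1) := fun i =>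
    (memLp_id_gaussianReal 2).const_mul (c i)
  have hlaw : HasGaussianLaw (fun y : ι → ℝ => ∑ i, c i * y i)
      (Measure.pi fun i => gaussianReal (μ i) 1) := by
    apply iIndepFun.hasGaussianLaw_fun_sum (X := fun i (y : ι → ℝ) => c i * y i)
    · intro i
      have h := (measurePreserving_eval (fun i => gaussianReal (μ i) 1) i)
      refine ⟨?_⟩
      have : (fun y : ι → ℝ => c i * y i) = (fun x => c i * x) ∘ Function.eval i := rfl
      rw [this, ← Measure.map_map (by fun_prop) (by fun_prop), h.map_eq,
        gaussianReal_map_const_mul]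
      infer_instance
    · exact iIndepFun_pi (X := fun i x => c i * x) fun i => by fun_prop
  rw [hlaw.map_eq_gaussianReal]
  congr 2
  · rw [integral_finsetSum]
    · refine Finset.sum_congr rfl fun i _ => ?_
      rw [integral_comp_eval (μ := fun i => gaussianReal (μ i) 1) (i := i)
        (f := fun x => c i * x) (by fun_prop), integral_const_mul, integral_id_gaussianReal]
    · intro i _
      exact integrable_comp_eval (μ := fun i => gaussianReal (μ i) 1) (i := i)
        (f := fun x => c i * x) ((hid i).integrable (by norm_num))
  · have h := variance_sum_pi (μ := fun i => gaussianReal (μ i) 1)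
      (X := fun i x => c i * x) hid
    rw [show (fun y : ι → ℝ => ∑ i, c i * y i) = ∑ i, fun y : ι → ℝ => c i * y i by
      ext y; simp, h]
    refine Finset.sum_congr rfl fun i _ => ?_
    rw [variance_const_mul, variance_fun_id_gaussianReal]
    simp

/-- Gaussian upper tail with the `1 / x` prefactor, which is what makes the union bound at level
`√(2 log (K L))` tend to zero. -/
lemma gaussianReal_real_Ioi_le {x : ℝ} (hx : 0 < x) :
    (gaussianReal 0 1).real (Set.Ioi x) ≤ Real.exp (-x ^ 2 / 2) / x := by
  rw [measureReal_def, gaussianReal_apply_eq_integral _ one_ne_zero,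
    ENNReal.toReal_ofReal (integral_nonneg fun y => gaussianPDFReal_nonneg _ _ y)]
  have hint : IntegrableOn (fun y => Real.exp (x ^ 2 / 2) * Real.exp (-x * y)) (Set.Ioi x) :=
    (integrableOn_exp_mul_Ioi (by linarith) x).const_mul _
  calc ∫ y in Set.Ioi x, gaussianPDFReal 0 1 y
      ≤ ∫ y in Set.Ioi x, Real.exp (x ^ 2 / 2) * Real.exp (-x * y) := by
        refine integral_mono (integrable_gaussianPDFReal _ _).restrict hint fun y => ?_
        rw [gaussianPDFReal_def, ← Real.exp_add]
        -- `y² / 2 ≥ x y - x² / 2`, and the normalising constant is at most one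
        have h1 : (Real.sqrt (2 * Real.pi * ((1 : NNReal) : ℝ)))⁻¹ ≤ 1 := by
          apply inv_le_one_of_one_le₀
          rw [Real.one_le_sqrt]
          have := Real.pi_gt_three
          simp only [NNReal.coe_one]; linarith
        have h2 : -(y - 0) ^ 2 / (2 * ((1 : NNReal) : ℝ)) ≤ x ^ 2 / 2 + -x * y := by
          simp only [NNReal.coe_one]
          nlinarith [sq_nonneg (y - x)]
        exact (mul_le_mul h1 (Real.exp_le_exp.2 h2) (Real.exp_nonneg _) zero_le_one).trans_eq
          (one_mul _)
    _ = Real.exp (-x ^ 2 / 2) / x := by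
        rw [integral_const_mul, integral_exp_mul_Ioi (by linarith), neg_div_neg_eq,
          ← mul_div_assoc, ← Real.exp_add]
        congr 2; ring

/-- Chebyshev bound for the lower tail of `N(μ, 1)`. -/
lemma gaussianReal_real_Iic_le {μ x : ℝ} (hx : x < μ) :
    (gaussianReal μ 1).real (Set.Iic x) ≤ 1 / (μ - x) ^ 2 := by
  have h := meas_ge_le_variance_div_sq (memLp_id_gaussianReal (μ := μ) (v := 1) 2)
    (sub_pos.2 hx)
  rw [variance_id_gaussianReal] at h
  simp only [id, integral_id_gaussianReal, NNReal.coe_one] at h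
  refine ENNReal.toReal_le_of_le_ofReal (by positivity) (le_trans (measure_mono ?_) h)
  intro y hy
  simp only [Set.mem_Iic, Set.mem_ofPred_eq] at hy ⊢
  rw [abs_of_nonpos (by linarith)]
  linarith

/-! ### Law of the rectangle statistics -/

lemma card_fin_filter_between {N k k' : ℕ} (h : k' ≤ N) :
    (Finset.univ.filter fun i : Fin N => k ≤ i.val ∧ i.val < k').card = k' - k := by
  rw [← Nat.card_Ico, ← Finset.card_map Fin.valEmbedding]
  congr 1
  ext x
  simp only [Finset.mem_map, Finset.mem_filter, Finset.mem_univ, true_and,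
    Fin.valEmbedding_apply, Finset.mem_Ico]
  constructor
  · rintro ⟨i, hi, rfl⟩; exact hi
  · intro hx; exact ⟨⟨x, by omega⟩, hx, rfl⟩

lemma sum_rect_const {N M k k' l l' : ℕ} (hk : k' ≤ N) (hl : l' ≤ M) (x : ℝ) :
    (∑ ij : Fin N × Fin M,
      if k ≤ ij.1.val ∧ ij.1.val < k' ∧ l ≤ ij.2.val ∧ ij.2.val < l' then x else 0) =
      ((k' - k : ℕ) : ℝ) * ((l' - l : ℕ) : ℝ) * x := by
  rw [← Finset.sum_filter, Finset.sum_const, nsmul_eq_mul, ← card_fin_filter_between hk,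
    ← card_fin_filter_between hl, ← Nat.cast_mul, ← Finset.card_product]
  congr 3
  ext ij
  simp [and_assoc]

/-- The coefficients of `ZrectStat` as a linear form in the observation. -/
def rectCoeff (N M n m k l : ℕ) (ij : Fin N × Fin M) : ℝ :=
  if k ≤ ij.1.val ∧ ij.1.val < k + n ∧ l ≤ ij.2.val ∧ ij.2.val < l + m
  then (Real.sqrt ((n : ℝ) * m))⁻¹ else 0

lemma ZrectStat_eq_sum (N M n m : ℕ) (y : (Fin N × Fin M) → ℝ) (k l : ℕ) :
    ZrectStat N M n m y k l = ∑ ij, rectCoeff N M n m k l ij * y ij := by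
  unfold ZrectStat rectCoeff
  rw [Finset.sum_div]
  refine Finset.sum_congr rfl fun ij _ => ?_
  split_ifs
  · rw [div_eq_inv_mul]
  · simp

lemma measurable_ZrectStat (N M n m k l : ℕ) :
    Measurable fun y => ZrectStat N M n m y k l := by
  simp only [ZrectStat_eq_sum]; fun_prop

/-- Under `P_S` a rectangle statistic is `N(μ, 1)`, with `μ` the statistic evaluated at `S`. -/
lemma map_ZrectStat {N M n m k l : ℕ} (hn : 1 ≤ n) (hm : 1 ≤ m) (hk : k + n ≤ N)
    (hl : l + m ≤ M) (S : Fin N → Fin M → ℝ) :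
    (matLaw N M S).map (fun y => ZrectStat N M n m y k l) =
      gaussianReal (ZrectStat N M n m (fun ij => S ij.1 ij.2) k l) 1 := by
  simp only [ZrectStat_eq_sum]
  unfold matLaw
  rw [map_linearForm_pi_gaussianReal]
  congr 1
  have hpos : (0 : ℝ) < (n : ℝ) * m := by positivity
  have : ∑ ij, rectCoeff N M n m k l ij ^ 2 = 1 := by
    unfold rectCoeff
    simp only [ite_pow, inv_pow, Real.sq_sqrt hpos.le, ne_eq, OfNat.ofNat_ne_zero,
      not_false_eq_true, zero_pow]
    rw [sum_rect_const hk hl]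
    simp only [Nat.add_sub_cancel_left]
    exact mul_inv_cancel₀ hpos.ne'
  rw [this, Real.toNNReal_one]

instance (N M : ℕ) (S : Fin N → Fin M → ℝ) : IsProbabilityMeasure (matLaw N M S) := by
  unfold matLaw; infer_instance

/-! ### The grid -/

lemma gridPt_one (n : ℕ) (η : ℝ) : gridPt n 1 η = 0 := by simp [gridPt]

lemma gridPt_mono (n : ℕ) {η : ℝ} (hη : 0 ≤ η) {k k' : ℕ} (h : k ≤ k') :
    gridPt n k η ≤ gridPt n k' η := by
  unfold gridPt
  have : (k : ℝ) ≤ k' := by exact_mod_cast h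
  gcongr

lemma gridMax_spec {N n : ℕ} (hnN : n ≤ N) (η : ℝ) :
    1 ≤ gridMax N n η ∧ gridPt n (gridMax N n η) η + n ≤ N :=
  Nat.findGreatest_spec (P := fun k => 1 ≤ k ∧ gridPt n k η + n ≤ N) (m := 1)
    (by omega) (by simpa [gridPt_one] using hnN)

lemma le_gridMax {N n k : ℕ} {η : ℝ} (h1 : 1 ≤ k) (h2 : k ≤ N + 2)
    (h3 : gridPt n k η + n ≤ N) : k ≤ gridMax N n η :=
  Nat.le_findGreatest h2 ⟨h1, h3⟩

lemma gridPt_add_le {N n k : ℕ} {η : ℝ} (hnN : n ≤ N) (hη : 0 ≤ η)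
    (hk : k ≤ gridMax N n η) : gridPt n k η + n ≤ N :=
  (Nat.add_le_add_right (gridPt_mono n hη hk) n).trans (gridMax_spec hnN η).2

lemma gridMax_le {N n : ℕ} {η : ℝ} (hn : 1 ≤ n) (hnN : n ≤ N) (hη : 0 < η) (hη1 : η ≤ 1) :
    (gridMax N n η : ℝ) ≤ (N : ℝ) / n / η := by
  have hspec := (gridMax_spec hnN η).2
  have h1 : ((gridMax N n η : ℝ) - 1) * n * η ≤ gridPt n (gridMax N n η) η := Nat.le_ceil _
  have h2 : (gridPt n (gridMax N n η) η : ℝ) + n ≤ N := by exact_mod_cast hspec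
  have hn0 : (0 : ℝ) < n := by exact_mod_cast hn
  rw [le_div_iff₀ hη, le_div_iff₀ hn0]
  nlinarith

/-- Every admissible offset is approximated from below by a grid offset, up to `n η`. -/
lemma exists_gridPt_near {N n k : ℕ} {η : ℝ} (hnη : 1 ≤ (n : ℝ) * η) (hk : k + n ≤ N) :
    ∃ κ ∈ Finset.Icc 1 (gridMax N n η), gridPt n κ η ≤ k ∧
      (k : ℝ) ≤ gridPt n κ η + (n : ℝ) * η := by
  have hpos : 0 < (n : ℝ) * η := by linarith
  set f := ⌊(k : ℝ) / ((n : ℝ) * η)⌋₊ with hf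
  have hfl : (f : ℝ) * (n * η) ≤ k := by
    rw [← le_div_iff₀ hpos]; exact Nat.floor_le (by positivity)
  have hfu : (k : ℝ) < (f + 1) * (n * η) := by
    rw [← div_lt_iff₀ hpos]; exact Nat.lt_floor_add_one _
  have hpt : gridPt n (f + 1) η = ⌈(f : ℝ) * (n * η)⌉₊ := by
    unfold gridPt; congr 1; push_cast; ring
  have hle : gridPt n (f + 1) η ≤ k := by rw [hpt]; exact Nat.ceil_le.2 hfl
  have hfk : f ≤ k := by
    have : (f : ℝ) ≤ k := by nlinarith [Nat.cast_nonneg (α := ℝ) f]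
    exact_mod_cast this
  refine ⟨f + 1, Finset.mem_Icc.2 ⟨by omega, le_gridMax (by omega) (by omega) (by omega)⟩,
    hle, ?_⟩
  have : (f : ℝ) * (n * η) ≤ gridPt n (f + 1) η := by rw [hpt]; exact Nat.le_ceil _
  linarith

/-! ### Error bounds for fixed parameters -/

/-- The supremum defining `Zgrid` runs over finitely many values, hence is a maximum. -/
lemma finite_gridValues (N M n m : ℕ) (η : ℝ) (y : (Fin N × Fin M) → ℝ) :
    {v | ∃ k ∈ Finset.Icc 1 (gridMax N n η), ∃ l ∈ Finset.Icc 1 (gridMax M m η),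
      v = ZrectStat N M n m y (gridPt n k η) (gridPt m l η)}.Finite := by
  refine (((Finset.Icc 1 (gridMax N n η)) ×ˢ (Finset.Icc 1 (gridMax M m η))).image
    fun kl => ZrectStat N M n m y (gridPt n kl.1 η) (gridPt m kl.2 η)).finite_toSet.subset ?_
  rintro v ⟨k, hk, l, hl, rfl⟩
  simp only [Finset.coe_image, Set.mem_image]
  exact ⟨(k, l), Finset.mem_coe.2 (Finset.mk_mem_product hk hl), rfl⟩

/-- The threshold of the grid scan test. -/
def thr (N M n m : ℕ) (η : ℝ) : ℝ :=
  Real.sqrt (2 * Real.log ((gridMax N n η : ℝ) * gridMax M m η))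

lemma psiZ_nonneg (N M n m : ℕ) (η : ℝ) (y : (Fin N × Fin M) → ℝ) : 0 ≤ psiZ N M n m η y := by
  unfold psiZ; split_ifs <;> norm_num

lemma psiZ_le_one (N M n m : ℕ) (η : ℝ) (y : (Fin N × Fin M) → ℝ) : psiZ N M n m η y ≤ 1 := by
  unfold psiZ; split_ifs <;> norm_num

lemma psiZ_le_sum {N M n m : ℕ} {η : ℝ} (y : (Fin N × Fin M) → ℝ) :
    psiZ N M n m η y ≤ ∑ k ∈ Finset.Icc 1 (gridMax N n η), ∑ l ∈ Finset.Icc 1 (gridMax M m η),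
      ((fun y => ZrectStat N M n m y (gridPt n k η) (gridPt m l η)) ⁻¹'
        Set.Ioi (thr N M n m η)).indicator (fun _ => (1 : ℝ)) y := by
  have hnn : ∀ k l, 0 ≤ ((fun y => ZrectStat N M n m y (gridPt n k η) (gridPt m l η)) ⁻¹'
        Set.Ioi (thr N M n m η)).indicator (fun _ => (1 : ℝ)) y :=
    fun k l => Set.indicator_nonneg (fun _ _ => zero_le_one) _
  unfold psiZ
  split_ifs with h
  · obtain hne | hne := Set.eq_empty_or_nonempty
        {v | ∃ k ∈ Finset.Icc 1 (gridMax N n η), ∃ l ∈ Finset.Icc 1 (gridMax M m η),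
          v = ZrectStat N M n m y (gridPt n k η) (gridPt m l η)}
    · -- on an empty grid the supremum is the junk value `0`, which never exceeds the threshold
      rw [Zgrid, hne, Real.sSup_empty] at h
      exact absurd h (not_lt.2 (Real.sqrt_nonneg _))
    · obtain ⟨v, ⟨k, hk, l, hl, rfl⟩, hv⟩ := exists_lt_of_lt_csSup hne h
      calc (1 : ℝ) = ((fun y => ZrectStat N M n m y (gridPt n k η) (gridPt m l η)) ⁻¹'
            Set.Ioi (thr N M n m η)).indicator (fun _ => (1 : ℝ)) y := by
            rw [Set.indicator_of_mem]; exact hv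
        _ ≤ ∑ l ∈ Finset.Icc 1 (gridMax M m η), _ :=
            Finset.single_le_sum (f := fun l =>
              ((fun y => ZrectStat N M n m y (gridPt n k η) (gridPt m l η)) ⁻¹'
                Set.Ioi (thr N M n m η)).indicator (fun _ => (1 : ℝ)) y)
              (fun l _ => hnn k l) hl
        _ ≤ _ := Finset.single_le_sum (f := fun k => ∑ l ∈ Finset.Icc 1 (gridMax M m η),
              ((fun y => ZrectStat N M n m y (gridPt n k η) (gridPt m l η)) ⁻¹'
                Set.Ioi (thr N M n m η)).indicator (fun _ => (1 : ℝ)) y)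
              (fun k _ => Finset.sum_nonneg fun l _ => hnn k l) hk
  · exact Finset.sum_nonneg fun k _ => Finset.sum_nonneg fun l _ => hnn k l

/-- Union bound for the first-type error; the factor `K L` cancels `exp (-thr² / 2)` exactly. -/
lemma alphaErr_le_s7 {N M n m : ℕ} {η : ℝ} (hn : 1 ≤ n) (hnN : n ≤ N) (hm : 1 ≤ m) (hmM : m ≤ M)
    (hη : 0 ≤ η) (hKL : 1 < (gridMax N n η : ℝ) * gridMax M m η) :
    alphaErr N M (psiZ N M n m η) ≤ 1 / thr N M n m η := by
  have hlog := Real.log_pos hKL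
  have hthr : 0 < thr N M n m η := Real.sqrt_pos.2 (by linarith)
  have hmeas : ∀ k l, MeasurableSet ((fun y => ZrectStat N M n m y (gridPt n k η)
      (gridPt m l η)) ⁻¹' Set.Ioi (thr N M n m η)) := fun k l =>
    measurable_ZrectStat N M n m _ _ measurableSet_Ioi
  have hint : ∀ k l, Integrable (((fun y => ZrectStat N M n m y (gridPt n k η)
      (gridPt m l η)) ⁻¹' Set.Ioi (thr N M n m η)).indicator (fun _ => (1 : ℝ)))
      (matLaw N M fun _ _ => 0) := fun k l => (integrable_const 1).indicator (hmeas k l)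
  unfold alphaErr
  calc ∫ y, psiZ N M n m η y ∂(matLaw N M fun _ _ => 0)
      ≤ ∫ y, ∑ k ∈ Finset.Icc 1 (gridMax N n η), ∑ l ∈ Finset.Icc 1 (gridMax M m η),
      ((fun y => ZrectStat N M n m y (gridPt n k η) (gridPt m l η)) ⁻¹'
        Set.Ioi (thr N M n m η)).indicator (fun _ => (1 : ℝ)) y ∂(matLaw N M fun _ _ => 0) :=
        integral_mono_of_nonneg (ae_of_all _ (psiZ_nonneg N M n m η))
          (integrable_finsetSum _ fun k _ => integrable_finsetSum _ fun l _ => hint k l)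
          (ae_of_all _ psiZ_le_sum)
    _ = ∑ k ∈ Finset.Icc 1 (gridMax N n η), ∑ l ∈ Finset.Icc 1 (gridMax M m η),
          (matLaw N M fun _ _ => 0).real ((fun y => ZrectStat N M n m y (gridPt n k η)
            (gridPt m l η)) ⁻¹' Set.Ioi (thr N M n m η)) := by
        rw [integral_finsetSum _ fun k _ => integrable_finsetSum _ fun l _ => hint k l]
        refine Finset.sum_congr rfl fun k _ => ?_
        rw [integral_finsetSum _ fun l _ => hint k l]
        refine Finset.sum_congr rfl fun l _ => ?_
        rw [integral_indicator_const _ (hmeas k l), smul_eq_mul, mul_one]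
    _ ≤ ∑ k ∈ Finset.Icc 1 (gridMax N n η), ∑ l ∈ Finset.Icc 1 (gridMax M m η),
          Real.exp (-thr N M n m η ^ 2 / 2) / thr N M n m η := by
        refine Finset.sum_le_sum fun k hk => Finset.sum_le_sum fun l hl => ?_
        rw [← map_measureReal_apply (measurable_ZrectStat N M n m _ _) measurableSet_Ioi,
          map_ZrectStat hn hm (gridPt_add_le hnN hη (Finset.mem_Icc.1 hk).2)
            (gridPt_add_le hmM hη (Finset.mem_Icc.1 hl).2)]
        have h0 : ZrectStat N M n m (fun _ => 0) (gridPt n k η) (gridPt m l η) = 0 := by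
          simp [ZrectStat]
        rw [h0]
        exact gaussianReal_real_Ioi_le hthr
    _ = 1 / thr N M n m η := by
        have hsq : thr N M n m η ^ 2 = 2 * Real.log ((gridMax N n η : ℝ) * gridMax M m η) :=
          Real.sq_sqrt (by linarith)
        have : -(2 * Real.log ((gridMax N n η : ℝ) * gridMax M m η)) / 2 =
          -Real.log ((gridMax N n η : ℝ) * gridMax M m η) := by ring
        rw [hsq, this, Real.exp_neg, Real.exp_log (by linarith)]
        simp only [Finset.sum_const, Nat.card_Icc, Nat.add_sub_cancel, nsmul_eq_mul]
        rw [← mul_assoc, ← mul_div_assoc, mul_inv_cancel₀ (by linarith)]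

/-- Under a rectangle alternative, some grid rectangle overlaps the support in a proportion at
least `(1 - η)²` of its cells, so the corresponding statistic has a large mean. -/
lemma exists_large_mean {N M n m : ℕ} {a η : ℝ} (hn : 1 ≤ n) (hm : 1 ≤ m) (ha : 0 ≤ a)
    (hη1 : η ≤ 1) (hnη : 1 ≤ (n : ℝ) * η) (hmη : 1 ≤ (m : ℝ) * η)
    {S : Fin N → Fin M → ℝ} (hS : S ∈ SAltRect N M n m a) :
    ∃ κ ∈ Finset.Icc 1 (gridMax N n η), ∃ l ∈ Finset.Icc 1 (gridMax M m η),
      a * Real.sqrt ((n : ℝ) * m) * (1 - η) ^ 2 ≤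
        ZrectStat N M n m (fun ij => S ij.1 ij.2) (gridPt n κ η) (gridPt m l η) := by
  obtain ⟨k, l, hk, hl, hin, hout⟩ := hS
  obtain ⟨κ, hκ, hκ1, hκ2⟩ := exists_gridPt_near hnη hk
  obtain ⟨lam, hlam, hlam1, hlam2⟩ := exists_gridPt_near hmη hl
  refine ⟨κ, hκ, lam, hlam, ?_⟩
  set g := gridPt n κ η
  set h := gridPt m lam η
  have hn0 : (0 : ℝ) < n := by exact_mod_cast hn
  have hm0 : (0 : ℝ) < m := by exact_mod_cast hm
  have hpos : (0 : ℝ) < (n : ℝ) * m := by positivity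
  have hS0 : ∀ i j, 0 ≤ S i j := by
    intro i j
    by_cases hc : k ≤ i.val ∧ i.val < k + n ∧ l ≤ j.val ∧ j.val < l + m
    · exact ha.trans (hin i j hc)
    · exact (hout i j hc).ge
  have hsum : ((g + n - k : ℕ) : ℝ) * ((h + m - l : ℕ) : ℝ) * a ≤ ∑ ij : Fin N × Fin M,
      if g ≤ ij.1.val ∧ ij.1.val < g + n ∧ h ≤ ij.2.val ∧ ij.2.val < h + m
      then S ij.1 ij.2 else 0 := by
    rw [← sum_rect_const (N := N) (M := M) (k := k) (l := l) (by omega) (by omega)]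
    refine Finset.sum_le_sum fun ij _ => ?_
    split_ifs with h1 h2 h2
    · exact hin _ _ (by omega)
    · omega
    · exact hS0 _ _
    · exact le_rfl
  have hrow : (n : ℝ) * (1 - η) ≤ ((g + n - k : ℕ) : ℝ) := by
    have : ((g + n : ℕ) : ℝ) - k ≤ ((g + n - k : ℕ) : ℝ) := by
      rw [sub_le_iff_le_add]; exact_mod_cast (by omega : g + n ≤ g + n - k + k)
    push_cast at this ⊢
    nlinarith
  have hcol : (m : ℝ) * (1 - η) ≤ ((h + m - l : ℕ) : ℝ) := by
    have : ((h + m : ℕ) : ℝ) - l ≤ ((h + m - l : ℕ) : ℝ) := by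
      rw [sub_le_iff_le_add]; exact_mod_cast (by omega : h + m ≤ h + m - l + l)
    push_cast at this ⊢
    nlinarith
  have h1η : 0 ≤ 1 - η := by linarith
  unfold ZrectStat
  rw [le_div_iff₀ (Real.sqrt_pos.2 hpos)]
  refine le_trans ?_ hsum
  calc a * Real.sqrt ((n : ℝ) * m) * (1 - η) ^ 2 * Real.sqrt ((n : ℝ) * m)
      = a * (1 - η) ^ 2 * (Real.sqrt ((n : ℝ) * m) * Real.sqrt ((n : ℝ) * m)) := by ring
    _ = ((n : ℝ) * (1 - η)) * ((m : ℝ) * (1 - η)) * a := by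
        rw [Real.mul_self_sqrt hpos.le]; ring
    _ ≤ _ := by gcongr

/-- Second-type error at a single alternative: the test accepts only if the well-aligned grid
statistic stays below the threshold, i.e. deviates by at least `G` from its mean. -/
lemma betaErr_le {N M n m : ℕ} {a η : ℝ} (hn : 1 ≤ n) (hnN : n ≤ N) (hm : 1 ≤ m) (hmM : m ≤ M)
    (ha : 0 ≤ a) (hη : 0 ≤ η) (hη1 : η ≤ 1) (hnη : 1 ≤ (n : ℝ) * η) (hmη : 1 ≤ (m : ℝ) * η)
    {G : ℝ} (hG : 0 < G)
    (hgap : G ≤ a * Real.sqrt ((n : ℝ) * m) * (1 - η) ^ 2 - thr N M n m η)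
    {S : Fin N → Fin M → ℝ} (hS : S ∈ SAltRect N M n m a) :
    betaErr N M S (psiZ N M n m η) ≤ 1 / G ^ 2 := by
  obtain ⟨k, hk, l, hl, hmean⟩ := exists_large_mean hn hm ha hη1 hnη hmη hS
  set μ := ZrectStat N M n m (fun ij => S ij.1 ij.2) (gridPt n k η) (gridPt m l η)
  have hmeas : MeasurableSet ((fun y => ZrectStat N M n m y (gridPt n k η)
      (gridPt m l η)) ⁻¹' Set.Iic (thr N M n m η)) :=
    measurable_ZrectStat N M n m _ _ measurableSet_Iic
  unfold betaErr
  calc ∫ y, (1 - psiZ N M n m η y) ∂(matLaw N M S)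
      ≤ ∫ y, ((fun y => ZrectStat N M n m y (gridPt n k η)
          (gridPt m l η)) ⁻¹' Set.Iic (thr N M n m η)).indicator (fun _ => (1 : ℝ)) y
          ∂(matLaw N M S) := by
        refine integral_mono_of_nonneg
          (ae_of_all _ fun y => sub_nonneg.2 (psiZ_le_one N M n m η y))
          ((integrable_const 1).indicator hmeas) (ae_of_all _ fun y => ?_)
        by_cases hy : ZrectStat N M n m y (gridPt n k η) (gridPt m l η) ≤ thr N M n m η
        · rw [Set.indicator_of_mem (by exact hy)]
          linarith [psiZ_nonneg N M n m η y]
        · rw [Set.indicator_of_notMem (by exact hy)]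
          have hZ : thr N M n m η < Zgrid N M n m η y :=
            (not_le.1 hy).trans_le (le_csSup (finite_gridValues N M n m η y).bddAbove
              ⟨k, hk, l, hl, rfl⟩)
          have hψ : psiZ N M n m η y = 1 := if_pos hZ
          exact (sub_eq_zero.2 hψ.symm).le
    _ = (matLaw N M S).real ((fun y => ZrectStat N M n m y (gridPt n k η)
            (gridPt m l η)) ⁻¹' Set.Iic (thr N M n m η)) := by
        rw [integral_indicator_const _ hmeas, smul_eq_mul, mul_one]
    _ ≤ 1 / (μ - thr N M n m η) ^ 2 := by
        rw [← map_measureReal_apply (measurable_ZrectStat N M n m _ _) measurableSet_Iic,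
          map_ZrectStat hn hm (gridPt_add_le hnN hη (Finset.mem_Icc.1 hk).2)
            (gridPt_add_le hmM hη (Finset.mem_Icc.1 hl).2)]
        exact gaussianReal_real_Iic_le (by linarith)
    _ ≤ 1 / G ^ 2 := by
        gcongr
        linarith

lemma betaMaxRect_nonneg (N M n m : ℕ) (a η : ℝ) :
    0 ≤ betaMaxRect N M n m a (psiZ N M n m η) := by
  refine Real.sSup_nonneg ?_
  rintro _ ⟨S, _, rfl⟩
  exact integral_nonneg fun y => sub_nonneg.2 (psiZ_le_one N M n m η y)

/-! ### Asymptotics -/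

lemma tendsto_gridMax {N n : ℕ → ℕ} {η : ℕ → ℝ} (hb : ∀ t, 1 ≤ n t ∧ n t ≤ N t)
    (hη0 : Tendsto η atTop (nhds 0))
    (hp : Tendsto (fun t => (n t : ℝ) / N t) atTop (nhds 0)) :
    Tendsto (fun t => gridMax (N t) (n t) (η t)) atTop atTop := by
  rw [tendsto_atTop]
  intro k
  filter_upwards [hη0.eventually_le_const one_pos,
    hp.eventually_lt_const (show (0 : ℝ) < 1 / (k + 3) by positivity)] with t ht1 ht2
  obtain ⟨hn, hnN⟩ := hb t
  have hn0 : (1 : ℝ) ≤ n t := by exact_mod_cast hn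
  have hN0 : (0 : ℝ) < N t := by exact_mod_cast hn.trans hnN
  have hkN : (n t : ℝ) * (k + 3) < N t := by
    rw [div_lt_div_iff₀ hN0 (by positivity)] at ht2; linarith
  have hk0 : (0 : ℝ) ≤ k := Nat.cast_nonneg k
  refine (Nat.le_add_right k 1).trans (le_gridMax (by omega) ?_ ?_)
  · have : (k : ℝ) ≤ N t := by nlinarith
    have : k ≤ N t := by exact_mod_cast this
    omega
  · have h1 : gridPt (n t) (k + 1) (η t) ≤ k * n t := by
      unfold gridPt
      refine Nat.ceil_le.2 ?_
      push_cast
      have : (0 : ℝ) ≤ k * n t := by positivity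
      nlinarith
    have h2 : k * n t + n t ≤ N t := by
      have : (k : ℝ) * n t + n t ≤ N t := by nlinarith
      exact_mod_cast this
    omega

/-- A real-valued `liminf` exceeding `b` gives an eventual lower bound `c > b`; the set of eventual
lower bounds cannot be empty, since the `liminf` would then be `0`. -/
lemma exists_gt_eventually_le_of_lt_liminf {u : ℕ → ℝ} {b : ℝ} (hb : 0 ≤ b)
    (h : b < liminf u atTop) : ∃ c, b < c ∧ ∀ᶠ t in atTop, c ≤ u t := by
  rw [liminf_eq] at h
  obtain hne | hne := Set.eq_empty_or_nonempty {a | ∀ᶠ t in atTop, a ≤ u t}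
  · rw [hne, Real.sSup_empty] at h; linarith
  · obtain ⟨c, hc, hbc⟩ := exists_lt_of_lt_csSup hne h
    exact ⟨c, hbc, hc⟩

lemma tendsto_log_inv_ratio {N n : ℕ → ℕ} (hb : ∀ t, 1 ≤ n t ∧ n t ≤ N t)
    (hp : Tendsto (fun t => (n t : ℝ) / N t) atTop (nhds 0)) :
    Tendsto (fun t => Real.log ((N t : ℝ) / n t)) atTop atTop := by
  have h : Tendsto (fun t => (n t : ℝ) / N t) atTop (nhdsWithin 0 (Set.Ioi 0)) := by
    refine tendsto_nhdsWithin_iff.2 ⟨hp, Eventually.of_forall fun t => ?_⟩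
    obtain ⟨h1, h2⟩ := hb t
    have : 1 ≤ N t := h1.trans h2
    exact Set.mem_Ioi.2 (by positivity)
  refine (Real.tendsto_log_atTop.comp (tendsto_inv_nhdsGT_zero.comp h)).congr fun t => ?_
  simp

/-- The threshold in terms of `Λ = log (1/p) + log (1/q)`: the mesh only costs `2 |log η|`. -/
lemma thr_le {N M n m : ℕ} {η : ℝ} (hn : 1 ≤ n) (hnN : n ≤ N) (hm : 1 ≤ m) (hmM : m ≤ M)
    (hη : 0 < η) (hη1 : η ≤ 1) :
    thr N M n m η ≤ Real.sqrt (2 * (Real.log ((N : ℝ) / n) + Real.log ((M : ℝ) / m) +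
      2 * |Real.log η|)) := by
  have hN : 1 ≤ N := hn.trans hnN
  have hM : 1 ≤ M := hm.trans hmM
  have hK : (0 : ℝ) < gridMax N n η := by exact_mod_cast (gridMax_spec hnN η).1
  have hL : (0 : ℝ) < gridMax M m η := by exact_mod_cast (gridMax_spec hmM η).1
  have h1 := Real.log_le_log hK (gridMax_le hn hnN hη hη1)
  have h2 := Real.log_le_log hL (gridMax_le hm hmM hη hη1)
  rw [Real.log_div (by positivity) hη.ne'] at h1 h2
  unfold thr
  apply Real.sqrt_le_sqrt
  rw [Real.log_mul hK.ne' hL.ne', abs_of_nonpos (Real.log_nonpos hη.le hη1)]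
  linarith

/-- Theorem 4 (upper bounds for rectangle detection): if
`liminf a² n m / (2(log(1/p) + log(1/q))) > 1` and the grid mesh `η` satisfies
`η → 0`, `nη → ∞`, `mη → ∞`, `|log η| = o(|log(pq)|)`, then
`γ^rect_{nm,a}(ψ_Z) → 0`, i.e. `α(ψ_Z) → 0` and the maximal second-type error
over `S^rect_{nm,a}` tends to `0`. -/
theorem stmt7 (N M n m : ℕ → ℕ) (a η : ℕ → ℝ)
    (hb : ∀ t, 1 ≤ n t ∧ n t ≤ N t ∧ 1 ≤ m t ∧ m t ≤ M t)
    (ha : ∀ t, 0 < a t) (hη : ∀ t, 0 < η t)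
    (hN : Tendsto N atTop atTop) (hM : Tendsto M atTop atTop)
    (hn : Tendsto n atTop atTop) (hm : Tendsto m atTop atTop)
    (hp : Tendsto (fun t => (n t : ℝ) / N t) atTop (nhds 0))
    (hq : Tendsto (fun t => (m t : ℝ) / M t) atTop (nhds 0))
    (hη0 : Tendsto η atTop (nhds 0))
    (hnη : Tendsto (fun t => (n t : ℝ) * η t) atTop atTop)
    (hmη : Tendsto (fun t => (m t : ℝ) * η t) atTop atTop)
    (hlogη : Tendsto (fun t =>
        |Real.log (η t)| / |Real.log (((n t : ℝ) / N t) * ((m t : ℝ) / M t))|)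
      atTop (nhds 0))
    (hliminf : 1 < Filter.liminf (fun t =>
        a t ^ 2 * ((n t : ℝ) * m t) /
          (2 * (Real.log ((N t : ℝ) / n t) + Real.log ((M t : ℝ) / m t)))) atTop) :
    Tendsto (fun t => alphaErr (N t) (M t) (psiZ (N t) (M t) (n t) (m t) (η t)))
      atTop (nhds 0) ∧
    Tendsto (fun t =>
        betaMaxRect (N t) (M t) (n t) (m t) (a t) (psiZ (N t) (M t) (n t) (m t) (η t)))
      atTop (nhds 0) := by
  have hbn : ∀ t, 1 ≤ n t ∧ n t ≤ N t := fun t => ⟨(hb t).1, (hb t).2.1⟩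
  have hbm : ∀ t, 1 ≤ m t ∧ m t ≤ M t := fun t => (hb t).2.2
  have hη1 : ∀ᶠ t in atTop, η t ≤ 1 := hη0.eventually_le_const one_pos
  have hKL : Tendsto (fun t => (gridMax (N t) (n t) (η t) : ℝ) * gridMax (M t) (m t) (η t))
      atTop atTop :=
    (tendsto_natCast_atTop_atTop.comp (tendsto_gridMax hbn hη0 hp)).atTop_mul_atTop₀
      (tendsto_natCast_atTop_atTop.comp (tendsto_gridMax hbm hη0 hq))
  constructor
  · have hthr : Tendsto (fun t => thr (N t) (M t) (n t) (m t) (η t)) atTop atTop :=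
      Real.tendsto_sqrt_atTop.comp
        ((Real.tendsto_log_atTop.comp hKL).const_mul_atTop two_pos)
    refine squeeze_zero' (Eventually.of_forall fun t =>
      integral_nonneg (psiZ_nonneg _ _ _ _ _)) ?_ (hthr.const_div_atTop 1)
    filter_upwards [hKL.eventually_gt_atTop 1] with t ht
    obtain ⟨h1, h2, h3, h4⟩ := hb t
    exact alphaErr_le_s7 h1 h2 h3 h4 (hη t).le ht
  · obtain ⟨c, hc1, hc⟩ := exists_gt_eventually_le_of_lt_liminf zero_le_one hliminf
    set lam : ℕ → ℝ := fun t => Real.log ((N t : ℝ) / n t) + Real.log ((M t : ℝ) / m t)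
      with hlam
    have hlam_top : Tendsto lam atTop atTop :=
      (tendsto_log_inv_ratio hbn hp).atTop_add_atTop (tendsto_log_inv_ratio hbm hq)
    set r : ℕ → ℝ := fun t =>
      |Real.log (η t)| / |Real.log (((n t : ℝ) / N t) * ((m t : ℝ) / M t))| with hr
    have hlogpq : ∀ t, Real.log (((n t : ℝ) / N t) * ((m t : ℝ) / M t)) = -lam t := by
      intro t
      obtain ⟨h1, h2, h3, h4⟩ := hb t
      have hN' : 1 ≤ N t := h1.trans h2
      have hM' : 1 ≤ M t := h3.trans h4
      rw [Real.log_mul (by positivity) (by positivity), ← inv_div (N t : ℝ) (n t),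
        ← inv_div (M t : ℝ) (m t), Real.log_inv, Real.log_inv]
      simp only [hlam]; ring
    -- lower bound for the separation between the mean and the threshold
    set G : ℕ → ℝ := fun t => Real.sqrt (2 * lam t) *
      (Real.sqrt c * (1 - η t) ^ 2 - Real.sqrt (1 + 2 * r t)) with hG
    have hfac : Tendsto (fun t => Real.sqrt c * (1 - η t) ^ 2 - Real.sqrt (1 + 2 * r t)) atTop
        (nhds (Real.sqrt c * (1 - 0) ^ 2 - Real.sqrt (1 + 2 * 0))) :=
      (((hη0.const_sub 1).pow 2).const_mul _).sub ((hlogη.const_mul 2).const_add 1).sqrt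
    have hGtop : Tendsto G atTop atTop := by
      refine (Real.tendsto_sqrt_atTop.comp
        (hlam_top.const_mul_atTop two_pos)).atTop_mul_pos ?_ hfac
      have : 1 < Real.sqrt c := by rw [Real.lt_sqrt zero_le_one]; simpa using hc1
      simpa using this
    have hlim : Tendsto (fun t => 1 / G t ^ 2) atTop (nhds 0) :=
      ((tendsto_pow_atTop two_ne_zero).comp hGtop).const_div_atTop 1
    refine squeeze_zero' (Eventually.of_forall fun t =>
      betaMaxRect_nonneg _ _ _ _ _ _) ?_ hlim
    filter_upwards [hη1, hnη.eventually_ge_atTop 1, hmη.eventually_ge_atTop 1, hc,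
      hGtop.eventually_gt_atTop 0, hlam_top.eventually_gt_atTop 0]
      with t ht1 htn htm htc htG htlam
    obtain ⟨h1, h2, h3, h4⟩ := hb t
    have hthr : thr (N t) (M t) (n t) (m t) (η t) ≤
        Real.sqrt (2 * lam t) * Real.sqrt (1 + 2 * r t) := by
      refine (thr_le h1 h2 h3 h4 (hη t) ht1).trans_eq ?_
      rw [← Real.sqrt_mul (by positivity)]
      congr 1
      have : |Real.log (η t)| = r t * lam t := by
        simp only [hr]
        rw [hlogpq, abs_neg, abs_of_pos htlam, div_mul_cancel₀ _ htlam.ne']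
      rw [this]
      simp only [hlam]; ring
    have hmean : Real.sqrt (2 * lam t) * Real.sqrt c ≤ a t * Real.sqrt ((n t : ℝ) * m t) := by
      have hnm : a t * Real.sqrt ((n t : ℝ) * m t) =
          Real.sqrt (a t ^ 2 * ((n t : ℝ) * m t)) := by
        rw [Real.sqrt_mul (sq_nonneg _), Real.sqrt_sq (ha t).le]
      rw [hnm, ← Real.sqrt_mul (by positivity)]
      apply Real.sqrt_le_sqrt
      have h2lam : 0 < 2 * lam t := by linarith
      rw [le_div_iff₀ h2lam] at htc
      linarith
    refine Real.sSup_le ?_ (by positivity)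
    rintro _ ⟨S, hS, rfl⟩
    refine betaErr_le h1 h2 h3 h4 (ha t).le (hη t).le ht1 htn htm htG ?_ hS
    have := mul_le_mul_of_nonneg_right hmean (sq_nonneg (1 - η t))
    simp only [hG]
    linarith
end
end
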